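/- Assume h(t,x,·) is convex on ℝ^m for every (t,x), and that the optimal control problem admits an optimal admissible pair (x*,u*), unique up to equality for Lebesgue-a.e. t. If (η*, η_T*) is an optimal solution to (Q) and η̄* denotes the (t,x)-marginal of η*, then η̄* coincides with the occupation measure of x*: η̄* equals the pushforward of Lebesgue measure on [0,T] under t ↦ (t, x*(t)). -/

import Mathlib

open MeasureTheory Set ProbabilityTheory

noncomputable section

/-- The input constraint set `U = [-1,1]^m`. -/
def Ubox (m : ℕ) : Set (Fin m → ℝ) := Set.Icc (fun _ => (-1 : ℝ)) (fun _ => (1 : ℝ))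

/-- The controlled vector field `F(t,x,u) = f(t,x) + g(t,x) u`. -/
def Fvec {n m : ℕ} (f : ℝ × (Fin n → ℝ) → Fin n → ℝ)
    (g : ℝ × (Fin n → ℝ) → Fin n → Fin m → ℝ)
    (z : ℝ × (Fin n → ℝ) × (Fin m → ℝ)) : Fin n → ℝ :=
  fun k => f (z.1, z.2.1) k + ∑ j, g (z.1, z.2.1) k j * z.2.2 j

/-- `(L_F v)(t,x,u) = ∂v/∂t + Σ_k (∂v/∂x_k)·[F(t,x,u)]_k`. -/
def LFop {n m : ℕ} (f : ℝ × (Fin n → ℝ) → Fin n → ℝ)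
    (g : ℝ × (Fin n → ℝ) → Fin n → Fin m → ℝ)
    (v : ℝ × (Fin n → ℝ) → ℝ) (z : ℝ × (Fin n → ℝ) × (Fin m → ℝ)) : ℝ :=
  fderiv ℝ v (z.1, z.2.1) ((1 : ℝ), (0 : Fin n → ℝ)) +
    ∑ k, fderiv ℝ v (z.1, z.2.1) ((0 : ℝ), Pi.single k (1 : ℝ)) * Fvec f g z k

/-- Liouville's equation for a pair of measures `(η, ηT)` with initial point `x₀`. -/
def SatisfiesLiouville {n m : ℕ} (T : ℝ) (x₀ : Fin n → ℝ)
    (f : ℝ × (Fin n → ℝ) → Fin n → ℝ) (g : ℝ × (Fin n → ℝ) → Fin n → Fin m → ℝ)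
    (η : Measure (ℝ × (Fin n → ℝ) × (Fin m → ℝ))) (ηT : Measure (Fin n → ℝ)) : Prop :=
  ∀ v : ℝ × (Fin n → ℝ) → ℝ, ContDiff ℝ 1 v →
    v (0, x₀) + ∫ z, LFop f g v z ∂η = ∫ y, v (T, y) ∂ηT

/-- An admissible pair: a Borel measurable control `u` with values in `U` and an
absolutely continuous trajectory `x` with `x(0) = x₀`, `x(T) ∈ X_T`, `x(t) ∈ X` on `[0,T]`
and `ẋ = F(t,x,u)` a.e. (encoded in integral form). -/
def IsAdmissiblePair {n m : ℕ} (T : ℝ) (X XT : Set (Fin n → ℝ)) (x₀ : Fin n → ℝ)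
    (f : ℝ × (Fin n → ℝ) → Fin n → ℝ) (g : ℝ × (Fin n → ℝ) → Fin n → Fin m → ℝ)
    (x : ℝ → Fin n → ℝ) (u : ℝ → Fin m → ℝ) : Prop :=
  Measurable u ∧ (∀ t ∈ Set.Icc (0 : ℝ) T, u t ∈ Ubox m) ∧
  x 0 = x₀ ∧ x T ∈ XT ∧ (∀ t ∈ Set.Icc (0 : ℝ) T, x t ∈ X) ∧
  IntegrableOn (fun s => Fvec f g (s, x s, u s)) (Set.Icc (0 : ℝ) T) volume ∧
  ∀ t ∈ Set.Icc (0 : ℝ) T, x t = x₀ + ∫ s in Set.Icc (0 : ℝ) t, Fvec f g (s, x s, u s)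

/-- The cost `J(x,u) = ∫₀^T h(t,x(t),u(t)) dt + H(x(T))` of an admissible pair. -/
def Jcost {n m : ℕ} (T : ℝ) (h : ℝ × (Fin n → ℝ) × (Fin m → ℝ) → ℝ)
    (H : (Fin n → ℝ) → ℝ) (x : ℝ → Fin n → ℝ) (u : ℝ → Fin m → ℝ) : ℝ :=
  (∫ t in Set.Icc (0 : ℝ) T, h (t, x t, u t)) + H (x T)

/-- The set of costs of admissible pairs; its infimum is `J*`. -/
def JVals {n m : ℕ} (T : ℝ) (X XT : Set (Fin n → ℝ)) (x₀ : Fin n → ℝ)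
    (f : ℝ × (Fin n → ℝ) → Fin n → ℝ) (g : ℝ × (Fin n → ℝ) → Fin n → Fin m → ℝ)
    (h : ℝ × (Fin n → ℝ) × (Fin m → ℝ) → ℝ) (H : (Fin n → ℝ) → ℝ) : Set ℝ :=
  {c | ∃ (x : ℝ → Fin n → ℝ) (u : ℝ → Fin m → ℝ),
    IsAdmissiblePair T X XT x₀ f g x u ∧ c = Jcost T h H x u}

/-- Feasibility for problem `(Q)`. -/
def QFeasible {n m : ℕ} (T : ℝ) (X XT : Set (Fin n → ℝ)) (x₀ : Fin n → ℝ)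
    (f : ℝ × (Fin n → ℝ) → Fin n → ℝ) (g : ℝ × (Fin n → ℝ) → Fin n → Fin m → ℝ)
    (η : Measure (ℝ × (Fin n → ℝ) × (Fin m → ℝ))) (ηT : Measure (Fin n → ℝ)) : Prop :=
  IsFiniteMeasure η ∧ IsFiniteMeasure ηT ∧
  η ((Set.Icc (0 : ℝ) T ×ˢ X ×ˢ Ubox m)ᶜ) = 0 ∧ ηT (XTᶜ) = 0 ∧
  SatisfiesLiouville T x₀ f g η ηT

/-- The cost `⟨η,h⟩ + ⟨η_T,H⟩` of a pair of measures. -/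
def Qcost {n m : ℕ} (h : ℝ × (Fin n → ℝ) × (Fin m → ℝ) → ℝ) (H : (Fin n → ℝ) → ℝ)
    (η : Measure (ℝ × (Fin n → ℝ) × (Fin m → ℝ))) (ηT : Measure (Fin n → ℝ)) : ℝ :=
  ∫ z, h z ∂η + ∫ y, H y ∂ηT

/-- The set of costs of feasible points of `(Q)`; its infimum is `q*`. -/
def QVals {n m : ℕ} (T : ℝ) (X XT : Set (Fin n → ℝ)) (x₀ : Fin n → ℝ)
    (f : ℝ × (Fin n → ℝ) → Fin n → ℝ) (g : ℝ × (Fin n → ℝ) → Fin n → Fin m → ℝ)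
    (h : ℝ × (Fin n → ℝ) × (Fin m → ℝ) → ℝ) (H : (Fin n → ℝ) → ℝ) : Set ℝ :=
  {c | ∃ (η : Measure (ℝ × (Fin n → ℝ) × (Fin m → ℝ))) (ηT : Measure (Fin n → ℝ)),
    QFeasible T X XT x₀ f g η ηT ∧ c = Qcost h H η ηT}

/-!
The occupation measure of an admissible pair is feasible for `(Q)` with the same cost, so an
optimal `(η, ηT)` costs at most `J*`. Conversely there is no relaxation gap: for every cost convex
in `u`, each feasible `(η, ηT)` is matched by an admissible pair that is at least as cheap. To find
it, replace the dynamics by `ẋ = q` with a bounded free velocity `q`, and charge a large multiple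
`κ` of the defect `‖q - F(t, x, u)‖` and of the distances to `X` and `X_T`. This penalised problem
has a continuous value function, whose mollification is a smooth subsolution of the
Hamilton–Jacobi inequality up to a small error; integrated against Liouville's equation it bounds
the penalised value by the cost of `(η, ηT)`. As `κ → ∞`, nearly optimal pairs converge uniformly
in `x` and weakly in `u`, and since `F` is affine and the cost convex in `u`, the limit is
admissible and the cost is lower semicontinuous.

Applying this to the costs `h + ε b(t, x)` and letting `ε → 0` gives an optimal pair with
`∫ b(t, x(t)) dt ≤ ∫ b dη`. By uniqueness `x = x*`, and replacing `b` by `-b` turns the inequality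
into an equality for every bounded continuous `b`.
-/

section Analysis

open Filter Topology

section Integrals

variable {Ω Y G : Type*} [MeasurableSpace Ω] {μ : Measure Ω} [IsFiniteMeasure μ]
  [PseudoMetricSpace Y] [NormedAddCommGroup G] {Q : Set Y} {Ψ : Y → G}

lemma integrable_comp_of_continuousOn_isCompact [MeasurableSpace Y] [BorelSpace Y]
    (hQ : IsCompact Q) (hQm : MeasurableSet Q) (hΨ : ContinuousOn Ψ Q) {p : Ω → Y}
    (hp : AEMeasurable p μ) (hpQ : ∀ᵐ ω ∂μ, p ω ∈ Q) : Integrable (fun ω => Ψ (p ω)) μ := by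
  have hmap : (μ.map p).restrict Q = μ.map p :=
    Measure.restrict_eq_self_of_ae_mem ((ae_map_iff hp hQm).2 hpQ)
  have hint : Integrable Ψ (μ.map p) := hmap ▸ hΨ.integrableOn_compact' hQ hQm
  exact hint.comp_aemeasurable hp

lemma integral_le_integral_add_const {f g : Ω → ℝ} {e : ℝ} (hf : Integrable f μ)
    (hg : Integrable g μ) (h : ∀ᵐ ω ∂μ, f ω ≤ g ω + e) :
    ∫ ω, f ω ∂μ ≤ ∫ ω, g ω ∂μ + e * μ.real univ := by
  have := integral_mono_ae hf (hg.add (integrable_const e)) h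
  simpa only [Pi.add_apply, integral_add hg (integrable_const e), integral_const, smul_eq_mul,
    mul_comm e] using this

lemma tendsto_integral_sub_comp_of_continuousOn_isCompact [NormedSpace ℝ G] (hQ : IsCompact Q)
    (hΨ : ContinuousOn Ψ Q) {ι : Type*} {l : Filter ι} {p q : ι → Ω → Y}
    (hp : ∀ i, ∀ᵐ ω ∂μ, p i ω ∈ Q) (hq : ∀ i, ∀ᵐ ω ∂μ, q i ω ∈ Q)
    (hpq : ∀ d > 0, ∀ᶠ i in l, ∀ᵐ ω ∂μ, dist (p i ω) (q i ω) < d) :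
    Tendsto (fun i => ∫ ω, (Ψ (p i ω) - Ψ (q i ω)) ∂μ) l (𝓝 0) := by
  rw [Metric.tendsto_nhds]
  intro ε hε
  set c := ε / (μ.real univ + 1)
  have hμ : 0 < μ.real univ + 1 := by positivity
  have hc : 0 < c := by positivity
  obtain ⟨d, hd, hΨd⟩ :=
    Metric.uniformContinuousOn_iff.1 (hQ.uniformContinuousOn_of_continuous hΨ) c hc
  filter_upwards [hpq d hd] with i hi
  rw [dist_zero_right]
  have hbound : ∀ᵐ ω ∂μ, ‖Ψ (p i ω) - Ψ (q i ω)‖ ≤ c := by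
    filter_upwards [hi, hp i, hq i] with ω hω hpω hqω
    rw [← dist_eq_norm]
    exact (hΨd _ hpω _ hqω hω).le
  calc ‖∫ ω, (Ψ (p i ω) - Ψ (q i ω)) ∂μ‖
    _ ≤ c * μ.real univ := norm_integral_le_of_norm_le_const hbound
    _ < c * (μ.real univ + 1) := by gcongr; linarith
    _ = ε := div_mul_cancel₀ ε hμ.ne'

end Integrals

section Limits

variable {S Y : Type*} [PseudoMetricSpace S] [PseudoMetricSpace Y]

lemma exists_lipschitzOnWith_tendstoUniformlyOn {s : Set S} (hs : IsCompact s) {Q : Set Y}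
    (hQ : IsCompact Q) {ι : Type*} {𝓤 : Ultrafilter ι} {K : NNReal} {f : ι → S → Y}
    (hf : ∀ i, LipschitzOnWith K (f i) s) (hfQ : ∀ i, MapsTo (f i) s Q) :
    ∃ φ : S → Y, LipschitzOnWith K φ s ∧ TendstoUniformlyOn f φ 𝓤 s := by
  have hlim : ∀ t, ∃ y, t ∈ s → Tendsto (fun i => f i t) 𝓤 (𝓝 y) := by
    intro t
    by_cases ht : t ∈ s
    · obtain ⟨y, -, hy⟩ := hQ.ultrafilter_le_nhds (𝓤.map fun i => f i t)
        (tendsto_principal.2 (Eventually.of_forall fun i => hfQ i ht))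
      exact ⟨y, fun _ => hy⟩
    · exact ⟨f (Classical.choice 𝓤.neBot.nonempty) t, fun h => (ht h).elim⟩
  choose φ hφ using hlim
  refine ⟨φ, LipschitzOnWith.of_dist_le_mul fun a ha b hb => ?_, ?_⟩
  · exact le_of_tendsto ((hφ a ha).dist (hφ b hb))
      (Eventually.of_forall fun i => (hf i).dist_le_mul a ha b hb)
  · have hequi : ∀ t ∈ ({s} : Set (Set S)), EquicontinuousOn f t := by
      rintro _ rfl
      exact (LipschitzOnWith.uniformEquicontinuousOn f K hf).equicontinuousOn
    refine UniformOnFun.tendsto_iff_tendstoUniformlyOn.1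
      ((EquicontinuousOn.tendsto_uniformOnFun_iff_pi' (by simpa) hequi 𝓤 φ).2 ?_) s rfl
    rw [tendsto_pi_nhds]
    rintro ⟨t, ht⟩
    exact hφ t (by simpa using ht)

lemma uniformContinuous_comp_and_exists_bound_of_isCompact {Z : Type*} [UniformSpace Z] {Q : Set Y}
    (hQ : IsCompact Q) {L : Y → ℝ} (hL : ContinuousOn L Q) {π : Z → Y} (hπ : UniformContinuous π)
    (hπQ : ∀ z, π z ∈ Q) : UniformContinuous (fun z => L (π z)) ∧ ∃ C, ∀ z, |L (π z)| ≤ C := by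
  obtain ⟨C, hC⟩ := hQ.exists_bound_of_continuousOn hL
  exact ⟨(uniformContinuousOn_iff_restrict.1 (hQ.uniformContinuousOn_of_continuous hL)).comp
    (hπ.subtype_mk hπQ), C, fun z => hC _ (hπQ z)⟩

lemma abs_ciInf_sub_ciInf_le {ι : Type*} [Nonempty ι] {f g : ι → ℝ} {ε : ℝ}
    (hf : BddBelow (range f)) (hg : BddBelow (range g)) (h : ∀ i, |f i - g i| ≤ ε) :
    |(⨅ i, f i) - ⨅ i, g i| ≤ ε := by
  rw [abs_sub_le_iff, sub_le_iff_le_add, sub_le_iff_le_add]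
  constructor
  · rw [add_comm, ← sub_le_iff_le_add]
    refine le_ciInf fun i => ?_
    linarith [ciInf_le hf i, (abs_le.1 (h i)).2]
  · rw [add_comm, ← sub_le_iff_le_add]
    refine le_ciInf fun i => ?_
    linarith [ciInf_le hg i, (abs_le.1 (h i)).1]

end Limits

end Analysis

section SublevelSets

open Filter

variable {Ω V : Type*} [MeasurableSpace Ω] {μ : Measure Ω} [IsFiniteMeasure μ]
  [NormedAddCommGroup V] {K : Set V} {ℓ : Ω → V → ℝ} {M c : ℝ}

lemma isClosed_setOf_ae_mem_and_integral_le (hK : IsClosed K)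
    (hmeas : ∀ v : Ω → V, AEStronglyMeasurable v μ → AEStronglyMeasurable (fun ω => ℓ ω (v ω)) μ)
    (hM : ∀ᵐ ω ∂μ, ∀ v ∈ K, ‖ℓ ω v‖ ≤ M) (hcont : ∀ᵐ ω ∂μ, ContinuousOn (ℓ ω) K) :
    IsClosed {v : Lp V 2 μ | (∀ᵐ ω ∂μ, v ω ∈ K) ∧ ∫ ω, ℓ ω (v ω) ∂μ ≤ c} := by
  refine IsSeqClosed.isClosed fun v w hv hvw => ?_
  obtain ⟨k, -, hk⟩ := (tendstoInMeasure_of_tendsto_Lp hvw).exists_seq_tendsto_ae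
  have hvK : ∀ᵐ ω ∂μ, ∀ j, v (k j) ω ∈ K := ae_all_iff.2 fun j => (hv (k j)).1
  have hwK : ∀ᵐ ω ∂μ, w ω ∈ K := by
    filter_upwards [hk, hvK] with ω hω hKω
    exact hK.mem_of_tendsto hω (Eventually.of_forall hKω)
  refine ⟨hwK, le_of_tendsto' (tendsto_integral_of_dominated_convergence (fun _ => M)
    (fun j => hmeas _ (Lp.aestronglyMeasurable (v (k j)))) (integrable_const M) (fun j => ?_) ?_)
    fun j => (hv (k j)).2⟩
  · filter_upwards [hM, hvK] with ω hMω hKω using hMω _ (hKω j)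
  · filter_upwards [hk, hvK, hwK, hcont] with ω hω hKω hwω hcω
    exact (hcω _ hwω).tendsto.comp
      (tendsto_nhdsWithin_iff.2 ⟨hω, Eventually.of_forall hKω⟩)

lemma convex_setOf_ae_mem_and_integral_le [NormedSpace ℝ V]
    (hmeas : ∀ v : Ω → V, AEStronglyMeasurable v μ → AEStronglyMeasurable (fun ω => ℓ ω (v ω)) μ)
    (hM : ∀ᵐ ω ∂μ, ∀ v ∈ K, ‖ℓ ω v‖ ≤ M) (hK : Convex ℝ K) (hconv : ∀ᵐ ω ∂μ, ConvexOn ℝ K (ℓ ω)) :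
    Convex ℝ {v : Lp V 2 μ | (∀ᵐ ω ∂μ, v ω ∈ K) ∧ ∫ ω, ℓ ω (v ω) ∂μ ≤ c} := by
  have hint : ∀ v : Lp V 2 μ, (∀ᵐ ω ∂μ, v ω ∈ K) → Integrable (fun ω => ℓ ω (v ω)) μ := by
    intro v hv
    refine Integrable.of_bound (hmeas _ (Lp.aestronglyMeasurable v)) M ?_
    filter_upwards [hM, hv] with ω hMω hω using hMω _ hω
  rintro v ⟨hvK, hvc⟩ w ⟨hwK, hwc⟩ a b ha hb hab
  have hcomb : ∀ᵐ ω ∂μ, (a • v + b • w) ω = a • v ω + b • w ω := by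
    filter_upwards [Lp.coeFn_add (a • v) (b • w), Lp.coeFn_smul a v, Lp.coeFn_smul b w]
      with ω hadd hav hbw
    rw [hadd, Pi.add_apply, hav, hbw, Pi.smul_apply, Pi.smul_apply]
  have hK' : ∀ᵐ ω ∂μ, (a • v + b • w) ω ∈ K := by
    filter_upwards [hcomb, hvK, hwK] with ω hω hv hw
    exact hω ▸ hK hv hw ha hb hab
  refine ⟨hK', ?_⟩
  calc ∫ ω, ℓ ω ((a • v + b • w) ω) ∂μ
      ≤ ∫ ω, (a * ℓ ω (v ω) + b * ℓ ω (w ω)) ∂μ := by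
        refine integral_mono_ae (hint _ hK')
          (((hint v hvK).const_mul a).add ((hint w hwK).const_mul b)) ?_
        filter_upwards [hcomb, hvK, hwK, hconv] with ω hω hv hw hc
        rw [hω]
        exact hc.2 hv hw ha hb hab
    _ = a * ∫ ω, ℓ ω (v ω) ∂μ + b * ∫ ω, ℓ ω (w ω) ∂μ := by
        rw [integral_add ((hint v hvK).const_mul a) ((hint w hwK).const_mul b),
          integral_const_mul, integral_const_mul]
    _ ≤ a * c + b * c := by gcongr
    _ = c := by rw [← add_mul, hab, one_mul]

end SublevelSets

section WeakConvergence

open Filter Topology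
open scoped InnerProductSpace

section Hilbert

variable {V ι : Type*} [NormedAddCommGroup V] [InnerProductSpace ℝ V] [CompleteSpace V]

lemma exists_tendsto_inner (𝓤 : Ultrafilter ι) {u : ι → V} {R : ℝ} (hR : ∀ i, ‖u i‖ ≤ R) :
    ∃ w, ∀ φ : V, Tendsto (fun i => ⟪φ, u i⟫_ℝ) 𝓤 (𝓝 ⟪φ, w⟫_ℝ) := by
  let J := InnerProductSpace.toDual ℝ V
  have hmem : ∀ i, StrongDual.toWeakDual (J (u i)) ∈
      WeakDual.toStrongDual ⁻¹' Metric.closedBall (0 : StrongDual ℝ V) R := by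
    intro i
    change J (u i) ∈ Metric.closedBall (0 : StrongDual ℝ V) R
    rw [mem_closedBall_zero_iff (E := StrongDual ℝ V), J.norm_map]
    exact hR i
  obtain ⟨d, -, hd⟩ := (WeakDual.isCompact_closedBall (𝕜 := ℝ) 0 R).ultrafilter_le_nhds
    (𝓤.map fun i => StrongDual.toWeakDual (J (u i)))
    (tendsto_principal.2 (Eventually.of_forall hmem))
  obtain ⟨w, hw⟩ := J.surjective (WeakDual.toStrongDual d)
  refine ⟨w, fun φ => ?_⟩
  have heval : Tendsto (fun i => J (u i) φ) 𝓤 (𝓝 (J w φ)) := by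
    rw [hw]
    exact ((WeakDual.eval_continuous φ).tendsto d).comp hd
  simpa only [J, InnerProductSpace.toDual_apply_apply, real_inner_comm φ] using heval

lemma mem_of_tendsto_inner_of_isClosed_of_convex {C : Set V} (hC : IsClosed C)
    (hconv : Convex ℝ C) {l : Filter ι} [l.NeBot] {u : ι → V} {w : V}
    (hu : ∀ φ : V, Tendsto (fun i => ⟪φ, u i⟫_ℝ) l (𝓝 ⟪φ, w⟫_ℝ)) (huC : ∀ᶠ i in l, u i ∈ C) :
    w ∈ C := by
  by_contra hw
  obtain ⟨ψ, s, hψC, hψw⟩ := geometric_hahn_banach_closed_point hconv hC hw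
  obtain ⟨φ, rfl⟩ := (InnerProductSpace.toDual ℝ V).surjective ψ
  simp only [InnerProductSpace.toDual_apply_apply] at hψC hψw
  exact hψw.not_ge (le_of_tendsto (hu φ) (huC.mono fun i hi => (hψC _ hi).le))

end Hilbert

variable {Ω V ι : Type*} [MeasurableSpace Ω] {μ : Measure Ω} [NormedAddCommGroup V]
  [InnerProductSpace ℝ V]

/-- Weak convergence in `L²(μ; V)` of the family `u` to `w` along the filter `l`. -/
def TendstoWeaklyL2 (u : ι → Ω → V) (l : Filter ι) (w : Ω → V) (μ : Measure Ω) : Prop :=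
  ∀ φ : Ω → V, MemLp φ 2 μ →
    Tendsto (fun i => ∫ ω, ⟪φ ω, u i ω⟫_ℝ ∂μ) l (𝓝 (∫ ω, ⟪φ ω, w ω⟫_ℝ ∂μ))

lemma inner_toLp_toLp {φ u : Ω → V} (hφ : MemLp φ 2 μ) (hu : MemLp u 2 μ) :
    ⟪hφ.toLp φ, hu.toLp u⟫_ℝ = ∫ ω, ⟪φ ω, u ω⟫_ℝ ∂μ := by
  rw [L2.inner_def]
  refine integral_congr_ae ?_
  filter_upwards [hφ.coeFn_toLp, hu.coeFn_toLp] with ω hφω huω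
  rw [hφω, huω]

lemma TendstoWeaklyL2.tendsto_setIntegral_inner {u : ι → Ω → V} {l : Filter ι}
    {w : Ω → V} (huw : TendstoWeaklyL2 u l w μ) {φ : Ω → V} (hφ : MemLp φ 2 μ) {s : Set Ω}
    (hs : MeasurableSet s) :
    Tendsto (fun i => ∫ ω in s, ⟪φ ω, u i ω⟫_ℝ ∂μ) l (𝓝 (∫ ω in s, ⟪φ ω, w ω⟫_ℝ ∂μ)) := by
  have hind : ∀ v : Ω → V, ∫ ω, ⟪s.indicator φ ω, v ω⟫_ℝ ∂μ = ∫ ω in s, ⟪φ ω, v ω⟫_ℝ ∂μ := by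
    intro v
    rw [← integral_indicator hs]
    congr with ω
    by_cases hω : ω ∈ s <;> simp [hω]
  simpa only [hind] using huw _ (hφ.indicator hs)

variable [CompleteSpace V]

lemma exists_tendstoWeaklyL2 (𝓤 : Ultrafilter ι) {u : ι → Ω → V} {R : ENNReal}
    (hu : ∀ i, MemLp (u i) 2 μ) (hRtop : R ≠ ⊤) (hR : ∀ i, eLpNorm (u i) 2 μ ≤ R) :
    ∃ w, MemLp w 2 μ ∧ TendstoWeaklyL2 u 𝓤 w μ := by
  obtain ⟨w, hw⟩ := exists_tendsto_inner 𝓤 (u := fun i => (hu i).toLp (u i)) (R := R.toReal)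
    fun i => (Lp.norm_toLp _ _).trans_le (ENNReal.toReal_mono hRtop (hR i))
  refine ⟨w, Lp.memLp w, fun φ hφ => ?_⟩
  simpa only [← inner_toLp_toLp hφ (Lp.memLp w), ← inner_toLp_toLp hφ (hu _), Lp.toLp_coeFn]
    using hw (hφ.toLp φ)

variable [IsFiniteMeasure μ] {K : Set V} {ℓ : Ω → V → ℝ} {M c : ℝ} {l : Filter ι} [l.NeBot]
  {u : ι → Ω → V} {w : Ω → V}

lemma TendstoWeaklyL2.ae_mem_and_integral_le (huw : TendstoWeaklyL2 u l w μ)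
    (hu : ∀ i, MemLp (u i) 2 μ) (hw : MemLp w 2 μ) (hK : IsClosed K)
    (huK : ∀ i, ∀ᵐ ω ∂μ, u i ω ∈ K)
    (hmeas : ∀ v : Ω → V, AEStronglyMeasurable v μ → AEStronglyMeasurable (fun ω => ℓ ω (v ω)) μ)
    (hM : ∀ᵐ ω ∂μ, ∀ v ∈ K, ‖ℓ ω v‖ ≤ M) (hcont : ∀ᵐ ω ∂μ, ContinuousOn (ℓ ω) K)
    (hKc : Convex ℝ K) (hconv : ∀ᵐ ω ∂μ, ConvexOn ℝ K (ℓ ω))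
    (hle : ∀ᶠ i in l, ∫ ω, ℓ ω (u i ω) ∂μ ≤ c) :
    (∀ᵐ ω ∂μ, w ω ∈ K) ∧ ∫ ω, ℓ ω (w ω) ∂μ ≤ c := by
  let C := {v : Lp V 2 μ | (∀ᵐ ω ∂μ, v ω ∈ K) ∧ ∫ ω, ℓ ω (v ω) ∂μ ≤ c}
  have mem_C : ∀ {v : Ω → V} (hv : MemLp v 2 μ),
      hv.toLp v ∈ C ↔ (∀ᵐ ω ∂μ, v ω ∈ K) ∧ ∫ ω, ℓ ω (v ω) ∂μ ≤ c := by
    intro v hv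
    refine and_congr (eventually_congr ?_) (iff_of_eq (congrArg (· ≤ c) (integral_congr_ae ?_)))
    · filter_upwards [hv.coeFn_toLp] with ω hω using hω ▸ Iff.rfl
    · filter_upwards [hv.coeFn_toLp] with ω hω using by rw [hω]
  refine (mem_C hw).1 (mem_of_tendsto_inner_of_isClosed_of_convex (l := l)
    (isClosed_setOf_ae_mem_and_integral_le hK hmeas hM hcont)
    (convex_setOf_ae_mem_and_integral_le hmeas hM hKc hconv)
    (u := fun i => (hu i).toLp (u i)) (fun φ => ?_) ?_)
  · rw [← Lp.toLp_coeFn φ (Lp.memLp φ)]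
    simpa only [inner_toLp_toLp] using huw φ (Lp.memLp φ)
  · exact hle.mono fun i hi => (mem_C (hu i)).2 ⟨huK i, hi⟩

lemma TendstoWeaklyL2.ae_mem (huw : TendstoWeaklyL2 u l w μ) (hu : ∀ i, MemLp (u i) 2 μ)
    (hw : MemLp w 2 μ) (hK : IsClosed K) (hKc : Convex ℝ K) (huK : ∀ i, ∀ᵐ ω ∂μ, u i ω ∈ K) :
    ∀ᵐ ω ∂μ, w ω ∈ K :=
  (huw.ae_mem_and_integral_le (ℓ := fun _ _ => 0) (M := 0) (c := 0) hu hw hK huK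
    (fun _ _ => aestronglyMeasurable_const) (by simp) (by simp [continuousOn_const]) hKc
    (Eventually.of_forall fun _ => convexOn_const 0 hKc) (by simp)).1

lemma exists_measurable_forall_mem_tendstoWeaklyL2 [MeasurableSpace V] [BorelSpace V]
    (𝓤 : Ultrafilter ι) (hu : ∀ i, AEStronglyMeasurable (u i) μ) (hK : IsClosed K)
    (hKc : Convex ℝ K) (hKb : Bornology.IsBounded K) (hKne : K.Nonempty)
    (huK : ∀ i, ∀ᵐ ω ∂μ, u i ω ∈ K) :
    ∃ w, Measurable w ∧ (∀ ω, w ω ∈ K) ∧ TendstoWeaklyL2 u 𝓤 w μ := by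
  obtain ⟨R, hR⟩ := hKb.exists_norm_le
  have huR : ∀ i, ∀ᵐ ω ∂μ, ‖u i ω‖ ≤ R := fun i => (huK i).mono fun ω => hR _
  have huL : ∀ i, MemLp (u i) 2 μ := fun i => .of_bound (hu i) R (huR i)
  obtain ⟨w, hw, huw⟩ := exists_tendstoWeaklyL2 𝓤 huL
    (by finiteness) fun i => eLpNorm_le_of_ae_bound (huR i)
  obtain ⟨w', hw', hw'K, hww'⟩ := hw.1.aemeasurable.exists_ae_eq_range_subset
    (huw.ae_mem huL hw hK hKc huK) hKne
  refine ⟨w', hw', fun ω => hw'K (mem_range_self ω), fun φ hφ => ?_⟩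
  convert huw φ hφ using 2
  exact integral_congr_ae (hww'.mono fun ω hω => by simp only [hω])

end WeakConvergence

section Mollification

open Topology
open scoped Convolution

section Derivative

variable {P : Type*} [NormedAddCommGroup P] [NormedSpace ℝ P]

lemma neg_le_fderiv_of_eventually_le {v : P → ℝ} {p w : P} {B : ℝ}
    (hv : DifferentiableAt ℝ v p) (h : ∀ᶠ s in 𝓝[>] (0 : ℝ), v p ≤ s * B + v (p + s • w)) :
    -B ≤ fderiv ℝ v p w := by
  have hderiv : HasDerivAt (fun s : ℝ => v (p + s • w)) (fderiv ℝ v p w) 0 :=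
    hv.hasFDerivAt.hasLineDerivAt w
  refine ge_of_tendsto hderiv.tendsto_slope_zero_right ?_
  filter_upwards [h, self_mem_nhdsWithin] with s hs (hs0 : 0 < s)
  simp only [zero_add, zero_smul, add_zero, smul_eq_mul]
  rw [inv_mul_eq_div, le_div_iff₀ hs0]
  linarith

end Derivative

variable {P : Type*} [NormedAddCommGroup P] [NormedSpace ℝ P] [FiniteDimensional ℝ P]
  [MeasurableSpace P] [BorelSpace P] (φ : ContDiffBump (0 : P)) {V : P → ℝ}

/-- The average of `V` over small translates, weighted by the normalized bump function `φ`. -/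
def mollify (V : P → ℝ) : P → ℝ :=
  φ.normed Measure.addHaar ⋆[ContinuousLinearMap.lsmul ℝ ℝ, Measure.addHaar] V

lemma contDiff_mollify (hV : Continuous V) : ContDiff ℝ 1 (mollify φ V) :=
  φ.hasCompactSupport_normed.contDiff_convolution_left _ φ.contDiff_normed hV.locallyIntegrable

lemma abs_mollify_sub_le (hV : Continuous V) {p : P} {c ε : ℝ} (hε : 0 ≤ ε)
    (h : ∀ q ∈ Metric.ball p φ.rOut, |V q - c| ≤ ε) : |mollify φ V p - c| ≤ ε :=
  dist_convolution_le hε φ.support_normed_eq.subset φ.nonneg_normed φ.integral_normed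
    hV.aestronglyMeasurable h

lemma mollify_le_add_mollify (hV : Continuous V) {p q : P} {c : ℝ}
    (h : ∀ y ∈ Metric.ball (0 : P) φ.rOut, V (p - y) ≤ c + V (q - y)) :
    mollify φ V p ≤ c + mollify φ V q := by
  let ρ := φ.normed (Measure.addHaar (G := P))
  have hint : ∀ r : P, Integrable (fun y => ρ y * V (r - y)) Measure.addHaar := fun r =>
    (φ.continuous_normed.mul (by fun_prop)).integrable_of_hasCompactSupport
      φ.hasCompactSupport_normed.mul_right
  have hρc : Integrable (fun y => ρ y * c) Measure.addHaar := φ.integrable_normed.mul_const c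
  have hpointwise : ∀ y, ρ y * V (p - y) ≤ ρ y * c + ρ y * V (q - y) := by
    intro y
    rw [← mul_add]
    by_cases hy : y ∈ Metric.ball (0 : P) φ.rOut
    · exact mul_le_mul_of_nonneg_left (h y hy) (φ.nonneg_normed y)
    · rw [← φ.support_normed_eq (μ := Measure.addHaar), Function.notMem_support] at hy
      simp only [ρ, hy, zero_mul, le_refl]
  calc ∫ y, ρ y * V (p - y) ∂Measure.addHaar
      ≤ ∫ y, (ρ y * c + ρ y * V (q - y)) ∂Measure.addHaar :=
        integral_mono (hint p) (hρc.add (hint q)) hpointwise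
    _ = c + ∫ y, ρ y * V (q - y) ∂Measure.addHaar := by
        rw [integral_add hρc (hint q), integral_mul_const, φ.integral_normed, one_mul]

end Mollification

section Bolza

/-- An optimal control problem with trivial dynamics `ẋ = velocity a` driven by controls in `A`,
cost `∫ lagrangian + terminal`, and free end point at time `horizon`. -/
structure BolzaProblem (E A : Type*) where
  horizon : ℝ
  velocity : A → E
  lagrangian : A → ℝ × E → ℝ
  terminal : E → ℝ

namespace BolzaProblem

section Trajectories

variable {E A : Type*} [NormedAddCommGroup E] [NormedSpace ℝ E] (P : BolzaProblem E A)

/-- The position at time `s` when starting from `p = (t, x)` with control `c`. -/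
def traj (p : ℝ × E) (c : ℝ → A) (s : ℝ) : E := p.2 + ∫ r in p.1..s, P.velocity (c r)

/-- The cost of the control `c` started from `p = (t, x)`. -/
def cost (p : ℝ × E) (c : ℝ → A) : ℝ :=
  (∫ s in p.1..P.horizon, P.lagrangian (c s) (s, P.traj p c s)) +
    P.terminal (P.traj p c P.horizon)

/-- The value function: the infimum of the cost over measurable controls. -/
def value [MeasurableSpace A] (p : ℝ × E) : ℝ := ⨅ c : {c : ℝ → A // Measurable c}, P.cost p c

variable {P} {p : ℝ × E} {c c' : ℝ → A}

lemma traj_congr {s : ℝ} (h : EqOn c c' (uIoc p.1 s)) : P.traj p c s = P.traj p c' s := by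
  unfold traj
  congr 1
  exact intervalIntegral.integral_congr_ae (ae_of_all _ fun r hr => by simp only [h hr])

lemma cost_congr (hp : p.1 ≤ P.horizon) (h : EqOn c c' (Ioc p.1 P.horizon)) :
    P.cost p c = P.cost p c' := by
  have htraj : ∀ s ∈ Icc p.1 P.horizon, P.traj p c s = P.traj p c' s := fun s hs =>
    traj_congr fun r hr => by
      rw [uIoc_of_le hs.1] at hr
      exact h ⟨hr.1, hr.2.trans hs.2⟩
  unfold cost
  rw [htraj _ ⟨hp, le_rfl⟩]
  congr 1
  refine intervalIntegral.integral_congr_ae (ae_of_all _ fun s hs => ?_)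
  rw [uIoc_of_le hp] at hs
  rw [htraj s ⟨hs.1.le, hs.2⟩, h hs]

lemma value_horizon [MeasurableSpace A] [Nonempty A] (x : E) :
    P.value (P.horizon, x) = P.terminal x := by
  have : Nonempty {c : ℝ → A // Measurable c} :=
    ⟨fun _ => Classical.arbitrary A, measurable_const⟩
  simp only [value, cost, traj, intervalIntegral.integral_same, zero_add, add_zero, ciInf_const]

end Trajectories

variable {E A : Type*} [NormedAddCommGroup E] [MeasurableSpace E] [MeasurableSpace A]

/-- Velocities are bounded by `M`, costs are bounded by `C` and uniformly continuous in `(t, x)`,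
uniformly over the controls. -/
structure IsRegular (P : BolzaProblem E A) (M C : ℝ) : Prop where
  measurable_velocity : Measurable P.velocity
  norm_velocity_le : ∀ a, ‖P.velocity a‖ ≤ M
  measurable_lagrangian : Measurable fun q : A × ℝ × E => P.lagrangian q.1 q.2
  abs_lagrangian_le : ∀ a p, |P.lagrangian a p| ≤ C
  uniformEquicontinuous_lagrangian : UniformEquicontinuous P.lagrangian
  abs_terminal_le : ∀ x, |P.terminal x| ≤ C
  uniformContinuous_terminal : UniformContinuous P.terminal

namespace IsRegular

variable {P : BolzaProblem E A} {M C : ℝ} {p : ℝ × E} {c : ℝ → A}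

lemma nonneg_velocity_bound (hP : P.IsRegular M C) [Nonempty A] : 0 ≤ M :=
  (norm_nonneg _).trans (hP.norm_velocity_le (Classical.arbitrary A))

lemma nonneg_cost_bound (hP : P.IsRegular M C) : 0 ≤ C :=
  (abs_nonneg _).trans (hP.abs_terminal_le 0)

lemma intervalIntegrable_velocity (hP : P.IsRegular M C) [BorelSpace E] [SecondCountableTopology E]
    (hc : Measurable c) (a b : ℝ) :
    IntervalIntegrable (fun r => P.velocity (c r)) volume a b := by
  rw [intervalIntegrable_iff]
  exact Measure.integrableOn_of_bounded (M := M) measure_Ioc_lt_top.ne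
    (hP.measurable_velocity.comp hc).aestronglyMeasurable
    (ae_of_all _ fun _ => hP.norm_velocity_le _)

variable [NormedSpace ℝ E]

lemma norm_traj_sub_le (hP : P.IsRegular M C) (p : ℝ × E) (c : ℝ → A) (s : ℝ) :
    ‖P.traj p c s - p.2‖ ≤ M * |s - p.1| := by
  rw [traj, add_sub_cancel_left]
  exact intervalIntegral.norm_integral_le_of_norm_le_const fun r _ => hP.norm_velocity_le _

lemma abs_integral_lagrangian_le (hP : P.IsRegular M C) (c : ℝ → A) (p : ℝ × E) (t : ℝ) :
    |∫ s in p.1..t, P.lagrangian (c s) (s, P.traj p c s)| ≤ C * |t - p.1| :=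
  intervalIntegral.norm_integral_le_of_norm_le_const
    (f := fun s => P.lagrangian (c s) (s, P.traj p c s)) fun _ _ => hP.abs_lagrangian_le _ _

lemma abs_cost_le (hP : P.IsRegular M C) (p : ℝ × E) (c : ℝ → A) :
    |P.cost p c| ≤ C * |P.horizon - p.1| + C :=
  (abs_add_le _ _).trans
    (add_le_add (hP.abs_integral_lagrangian_le c p _) (hP.abs_terminal_le _))

lemma bddBelow_range_cost (hP : P.IsRegular M C) (p : ℝ × E) :
    BddBelow (range fun c : {c : ℝ → A // Measurable c} => P.cost p c) :=
  ⟨-(C * |P.horizon - p.1| + C), by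
    rintro _ ⟨c, rfl⟩
    exact (abs_le.1 (hP.abs_cost_le p c)).1⟩

lemma value_le_cost (hP : P.IsRegular M C) (p : ℝ × E) (hc : Measurable c) :
    P.value p ≤ P.cost p c :=
  ciInf_le (hP.bddBelow_range_cost p) ⟨c, hc⟩

variable [BorelSpace E] [SecondCountableTopology E]

lemma traj_traj (hP : P.IsRegular M C) (hc : Measurable c) (p : ℝ × E) (t s : ℝ) :
    P.traj (t, P.traj p c t) c s = P.traj p c s := by
  simp only [traj, add_assoc]
  rw [intervalIntegral.integral_add_adjacent_intervals
    (hP.intervalIntegrable_velocity hc p.1 t) (hP.intervalIntegrable_velocity hc t s)]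

lemma continuous_traj (hP : P.IsRegular M C) (hc : Measurable c) (p : ℝ × E) :
    Continuous (P.traj p c) :=
  continuous_const.add
    (intervalIntegral.continuous_primitive (fun a b => hP.intervalIntegrable_velocity hc a b) _)

lemma intervalIntegrable_lagrangian (hP : P.IsRegular M C) (hc : Measurable c) (p : ℝ × E)
    (a b : ℝ) :
    IntervalIntegrable (fun s => P.lagrangian (c s) (s, P.traj p c s)) volume a b := by
  rw [intervalIntegrable_iff]
  exact Measure.integrableOn_of_bounded (M := C) measure_Ioc_lt_top.ne
    (hP.measurable_lagrangian.comp (hc.prodMk (measurable_id.prodMk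
      (hP.continuous_traj hc p).measurable))).aestronglyMeasurable
    (ae_of_all _ fun _ => hP.abs_lagrangian_le _ _)

lemma cost_eq_integral_add_cost (hP : P.IsRegular M C) (hc : Measurable c) (p : ℝ × E) (t : ℝ) :
    P.cost p c = (∫ s in p.1..t, P.lagrangian (c s) (s, P.traj p c s)) +
      P.cost (t, P.traj p c t) c := by
  simp only [cost, hP.traj_traj hc]
  rw [← add_assoc, intervalIntegral.integral_add_adjacent_intervals
    (hP.intervalIntegrable_lagrangian hc p p.1 t)
    (hP.intervalIntegrable_lagrangian hc p t P.horizon)]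

lemma value_le_integral_add_value (hP : P.IsRegular M C)
    {t : ℝ} (hpt : p.1 ≤ t) (ht : t ≤ P.horizon)
    (hc : Measurable c) :
    P.value p ≤ (∫ s in p.1..t, P.lagrangian (c s) (s, P.traj p c s)) +
      P.value (t, P.traj p c t) := by
  rw [← sub_le_iff_le_add']
  have : Nonempty {c : ℝ → A // Measurable c} := ⟨c, hc⟩
  refine le_ciInf fun d => ?_
  rw [sub_le_iff_le_add']
  classical
  let b : ℝ → A := (Iic t).piecewise c d
  have hb : Measurable b := hc.piecewise measurableSet_Iic d.2
  have hbc : ∀ s ∈ Iic t, b s = c s := fun s hs => piecewise_eq_of_mem _ _ _ hs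
  have hbd : EqOn b d (Ioc t P.horizon) := fun s hs =>
    piecewise_eq_of_notMem _ _ _ (notMem_Iic.2 hs.1)
  have htraj : ∀ s ∈ Icc p.1 t, P.traj p b s = P.traj p c s := fun s hs =>
    traj_congr fun r hr => by
      rw [uIoc_of_le hs.1] at hr
      exact hbc r (hr.2.trans hs.2)
  calc P.value p ≤ P.cost p b := hP.value_le_cost p hb
    _ = (∫ s in p.1..t, P.lagrangian (b s) (s, P.traj p b s)) + P.cost (t, P.traj p b t) b :=
      hP.cost_eq_integral_add_cost hb p t
    _ = (∫ s in p.1..t, P.lagrangian (c s) (s, P.traj p c s)) + P.cost (t, P.traj p c t) d := by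
      rw [htraj t ⟨hpt, le_rfl⟩, cost_congr ht hbd]
      congr 1
      refine intervalIntegral.integral_congr fun s hs => ?_
      rw [uIcc_of_le hpt] at hs
      simp only [htraj s hs, hbc s hs.2]

lemma exists_abs_cost_sub_le_of_fst_eq (hP : P.IsRegular M C) {e : ℝ} (he : 0 < e) :
    ∃ d > 0, ∀ (t : ℝ) (x y : E) (c : ℝ → A), Measurable c → dist x y < d →
      |P.cost (t, x) c - P.cost (t, y) c| ≤ e * |P.horizon - t| + e := by
  obtain ⟨d₁, hd₁, hL⟩ :=
    Metric.uniformEquicontinuous_iff.1 hP.uniformEquicontinuous_lagrangian e he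
  obtain ⟨d₂, hd₂, hG⟩ := Metric.uniformContinuous_iff.1 hP.uniformContinuous_terminal e he
  refine ⟨min d₁ d₂, lt_min hd₁ hd₂, fun t x y c hc hxy => ?_⟩
  have htraj : ∀ s, dist (P.traj (t, x) c s) (P.traj (t, y) c s) = dist x y := fun s => by
    simp only [traj, dist_add_right]
  have hrunning : |∫ s in t..P.horizon, (P.lagrangian (c s) (s, P.traj (t, x) c s) -
      P.lagrangian (c s) (s, P.traj (t, y) c s))| ≤ e * |P.horizon - t| := by
    refine intervalIntegral.norm_integral_le_of_norm_le_const (f := fun s =>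
      P.lagrangian (c s) (s, P.traj (t, x) c s) - P.lagrangian (c s) (s, P.traj (t, y) c s))
      fun s _ => ?_
    refine (hL (s, P.traj (t, x) c s) (s, P.traj (t, y) c s) ?_ (c s)).le
    rw [Prod.dist_eq, dist_self, htraj]
    exact max_lt hd₁ (hxy.trans_le (min_le_left _ _))
  have hterminal : |P.terminal (P.traj (t, x) c P.horizon) -
      P.terminal (P.traj (t, y) c P.horizon)| ≤ e :=
    (hG ((htraj _).trans_lt (hxy.trans_le (min_le_right _ _)))).le
  rw [intervalIntegral.integral_sub (hP.intervalIntegrable_lagrangian hc (t, x) _ _)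
    (hP.intervalIntegrable_lagrangian hc (t, y) _ _)] at hrunning
  unfold cost
  rw [add_sub_add_comm]
  exact (abs_add_le _ _).trans (add_le_add hrunning hterminal)

lemma exists_abs_cost_sub_le (hP : P.IsRegular M C) (B : ℝ) {e : ℝ} (he : 0 < e) [Nonempty A] :
    ∃ d > 0, ∀ (p q : ℝ × E) (c : ℝ → A), Measurable c → |P.horizon - q.1| ≤ B → dist p q < d →
      |P.cost p c - P.cost q c| ≤ e := by
  have hM := hP.nonneg_velocity_bound
  have hC := hP.nonneg_cost_bound
  obtain ⟨d, hd, hcost⟩ :=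
    hP.exists_abs_cost_sub_le_of_fst_eq (e := e / 2 / (|B| + 1)) (by positivity)
  refine ⟨min (d / (M + 1)) (e / 2 / (C + 1)), by positivity, fun p q c hc hq hpq => ?_⟩
  rw [lt_min_iff, lt_div_iff₀ (by positivity), lt_div_iff₀ (by positivity)] at hpq
  have htime : |q.1 - p.1| ≤ dist p q := by
    rw [abs_sub_comm]
    exact le_max_left _ _
  have hspace : dist (P.traj p c q.1) q.2 < d := calc
    dist (P.traj p c q.1) q.2 ≤ dist (P.traj p c q.1) p.2 + dist p.2 q.2 := dist_triangle _ _ _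
    _ ≤ M * |q.1 - p.1| + dist p q :=
      add_le_add ((dist_eq_norm _ _).trans_le (hP.norm_traj_sub_le p c q.1)) (le_max_right _ _)
    _ ≤ M * dist p q + dist p q := by gcongr
    _ < d := by linarith
  have hstart : |∫ s in p.1..q.1, P.lagrangian (c s) (s, P.traj p c s)| ≤ e / 2 := calc
    _ ≤ C * |q.1 - p.1| := hP.abs_integral_lagrangian_le c p q.1
    _ ≤ C * dist p q := by gcongr
    _ ≤ e / 2 := by linarith [dist_nonneg (x := p) (y := q)]
  have hrest : |P.cost (q.1, P.traj p c q.1) c - P.cost q c| ≤ e / 2 := calc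
    _ ≤ e / 2 / (|B| + 1) * |P.horizon - q.1| + e / 2 / (|B| + 1) := hcost q.1 _ q.2 c hc hspace
    _ ≤ e / 2 / (|B| + 1) * |B| + e / 2 / (|B| + 1) :=
      add_le_add_left (mul_le_mul_of_nonneg_left (hq.trans (le_abs_self B)) (by positivity)) _
    _ = e / 2 := by field_simp
  rw [hP.cost_eq_integral_add_cost hc p q.1, add_sub_assoc]
  exact (abs_add_le _ _).trans ((add_le_add hstart hrest).trans_eq (add_halves e))

variable [Nonempty A]

lemma exists_abs_value_sub_le (hP : P.IsRegular M C) (B : ℝ) {e : ℝ} (he : 0 < e) :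
    ∃ d > 0, ∀ p q : ℝ × E, |P.horizon - q.1| ≤ B → dist p q < d →
      |P.value p - P.value q| ≤ e := by
  obtain ⟨d, hd, hcost⟩ := hP.exists_abs_cost_sub_le B he
  have : Nonempty {c : ℝ → A // Measurable c} :=
    ⟨fun _ => Classical.arbitrary A, measurable_const⟩
  exact ⟨d, hd, fun p q hq hpq => abs_ciInf_sub_ciInf_le (hP.bddBelow_range_cost p)
    (hP.bddBelow_range_cost q) fun c => hcost p q c c.2 hq hpq⟩

lemma continuous_value (hP : P.IsRegular M C) : Continuous P.value := by
  rw [Metric.continuous_iff]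
  intro q e he
  obtain ⟨d, hd, hvalue⟩ := hP.exists_abs_value_sub_le |P.horizon - q.1| (half_pos he)
  exact ⟨d, hd, fun p hpq => (hvalue p q le_rfl hpq).trans_lt (half_lt_self he)⟩

lemma exists_value_le_add_value (hP : P.IsRegular M C) [CompleteSpace E] {e : ℝ} (he : 0 < e) :
    ∃ d > 0, ∀ (p q : ℝ × E) (a : A) (s : ℝ), dist q p < d → 0 ≤ s → s < d →
      q.1 + s ≤ P.horizon →
      P.value q ≤ s * (P.lagrangian a p + e) + P.value (q + s • ((1 : ℝ), P.velocity a)) := by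
  have hM := hP.nonneg_velocity_bound
  obtain ⟨d, hd, hL⟩ := Metric.uniformEquicontinuous_iff.1 hP.uniformEquicontinuous_lagrangian e he
  refine ⟨d / (M + 2), by positivity, fun p q a s hqp hs hsd hqs => ?_⟩
  rw [lt_div_iff₀ (by positivity)] at hqp hsd
  have hlag : ∀ r ∈ Icc q.1 (q.1 + s),
      P.lagrangian a (r, P.traj q (fun _ => a) r) ≤ P.lagrangian a p + e := by
    intro r hr
    have hr0 : 0 ≤ r - q.1 := sub_nonneg.2 hr.1
    have hdist : dist (r, P.traj q (fun _ => a) r) q ≤ (M + 1) * s := by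
      have htraj := hP.norm_traj_sub_le q (fun _ => a) r
      rw [abs_of_nonneg hr0] at htraj
      rw [Prod.dist_eq, max_le_iff, dist_eq_norm, Real.norm_of_nonneg hr0, dist_eq_norm]
      constructor <;> nlinarith [hr.2]
    have hclose : dist (r, P.traj q (fun _ => a) r) p < d := by
      nlinarith [dist_triangle (r, P.traj q (fun _ => a) r) q p]
    linarith [(abs_lt.1 (hL _ _ hclose a)).2]
  have hend : (q.1 + s, P.traj q (fun _ => a) (q.1 + s)) = q + s • ((1 : ℝ), P.velocity a) := by
    ext
    · simp
    · simp [traj, intervalIntegral.integral_const]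
  have hint : ∫ r in q.1..q.1 + s, P.lagrangian a (r, P.traj q (fun _ => a) r) ≤
      ∫ _ in q.1..q.1 + s, (P.lagrangian a p + e) :=
    intervalIntegral.integral_mono_on (by linarith)
      (hP.intervalIntegrable_lagrangian (c := fun _ => a) measurable_const q _ _)
      intervalIntegrable_const hlag
  rw [intervalIntegral.integral_const, add_sub_cancel_left, smul_eq_mul] at hint
  have hdpp := hP.value_le_integral_add_value (p := q) (c := fun _ => a) (by linarith) hqs
    measurable_const
  rw [hend] at hdpp
  linarith

section Subsolution

variable [FiniteDimensional ℝ E]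

/-- Mollifying the value function, slightly delayed in time so that only times before the horizon
are involved, yields a smooth approximate subsolution of the Hamilton–Jacobi–Bellman equation. -/
lemma exists_contDiff_subsolution (hP : P.IsRegular M C) {e : ℝ} (he : 0 < e) :
    ∃ v : ℝ × E → ℝ, ContDiff ℝ 1 v ∧
      (∀ p : ℝ × E, p.1 ∈ Icc 0 P.horizon → |v p - P.value p| ≤ e) ∧
      ∀ p : ℝ × E, p.1 ∈ Icc 0 P.horizon → ∀ a,
        -(P.lagrangian a p + e) ≤ fderiv ℝ v p ((1 : ℝ), P.velocity a) := by
  obtain ⟨d₁, hd₁, hvalue⟩ := hP.exists_abs_value_sub_le P.horizon he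
  obtain ⟨d₂, hd₂, hstep⟩ := hP.exists_value_le_add_value he
  obtain ⟨δ, hδ, hδ'⟩ := exists_between (a₁ := 0) (a₂ := min d₁ d₂ / 4) (by positivity)
  have hδ₁ : 4 * δ < d₁ := by linarith [min_le_left d₁ d₂]
  have hδ₂ : 4 * δ < d₂ := by linarith [min_le_right d₁ d₂]
  let φ : ContDiffBump (0 : ℝ × E) := ⟨δ / 2, δ, by positivity, by linarith⟩
  let V : ℝ × E → ℝ := fun p => P.value (p - (2 * δ, 0))
  have hV : Continuous V := hP.continuous_value.comp (by fun_prop)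
  have hshift : ∀ p q : ℝ × E, dist q p < δ → dist (q - (2 * δ, 0)) p < 4 * δ := by
    intro p q hqp
    have : dist (q - (2 * δ, 0)) q = 2 * δ := by
      simp [Prod.norm_def, abs_of_pos hδ, hδ.le]
    linarith [dist_triangle (q - (2 * δ, 0)) q p]
  have hv := contDiff_mollify φ hV
  refine ⟨mollify φ V, hv, fun p hp => ?_, fun p hp a => ?_⟩
  · refine abs_mollify_sub_le φ hV he.le fun q hq => hvalue _ _ ?_ ((hshift p q hq).trans hδ₁)
    rw [abs_of_nonneg (sub_nonneg.2 hp.2)]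
    linarith [hp.1]
  · refine neg_le_fderiv_of_eventually_le (hv.differentiable one_ne_zero p) ?_
    filter_upwards [self_mem_nhdsWithin, mem_nhdsWithin_of_mem_nhds (Iio_mem_nhds hδ)]
      with s (hs : 0 < s) (hsδ : s < δ)
    refine mollify_le_add_mollify φ hV fun y hy => ?_
    have hyp : dist (p - y) p < δ := by simpa using hy
    have hy₁ : |y.1| < δ := (norm_fst_le y).trans_lt (by simpa using hy)
    have := hstep p (p - y - (2 * δ, 0)) a s ((hshift p _ hyp).trans hδ₂) hs.le (by linarith) (by
      simp only [Prod.fst_sub]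
      linarith [(abs_lt.1 hy₁).1, hp.2])
    convert this using 3
    abel

lemma value_le_integral_add (hP : P.IsRegular M C)
    {Ω : Type*} [MeasurableSpace Ω] {μ : Measure Ω} [IsFiniteMeasure μ]
    {ν : Measure E} [IsFiniteMeasure ν] {K : Set E} (hK : IsCompact K) {pt : Ω → ℝ × E} {α : Ω → A}
    (hpt : AEMeasurable pt μ) (hα : AEMeasurable α μ)
    (hptK : ∀ᵐ ω ∂μ, pt ω ∈ Icc 0 P.horizon ×ˢ K) {x₀ : E} (hT : 0 ≤ P.horizon)
    {v : ℝ × E → ℝ} (hv : ContDiff ℝ 1 v) {e : ℝ}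
    (hvalue : ∀ p : ℝ × E, p.1 ∈ Icc 0 P.horizon → |v p - P.value p| ≤ e)
    (hsub : ∀ p : ℝ × E, p.1 ∈ Icc 0 P.horizon → ∀ a,
      -(P.lagrangian a p + e) ≤ fderiv ℝ v p ((1 : ℝ), P.velocity a))
    (hliouville : v (0, x₀) + ∫ ω, fderiv ℝ v (pt ω) ((1 : ℝ), P.velocity (α ω)) ∂μ =
      ∫ y, v (P.horizon, y) ∂ν) :
    P.value (0, x₀) ≤ ∫ ω, P.lagrangian (α ω) (pt ω) ∂μ + ∫ y, P.terminal y ∂ν +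
      e * (1 + μ.real univ + ν.real univ) := by
  have hterminal : Integrable P.terminal ν :=
    .of_bound hP.uniformContinuous_terminal.continuous.aestronglyMeasurable C
      (ae_of_all _ hP.abs_terminal_le)
  have hlag : Integrable (fun ω => P.lagrangian (α ω) (pt ω)) μ :=
    .of_bound (hP.measurable_lagrangian.comp_aemeasurable (hα.prodMk hpt)).aestronglyMeasurable C
      (ae_of_all _ fun _ => hP.abs_lagrangian_le _ _)
  have hfderiv : Integrable (fun ω => fderiv ℝ v (pt ω) ((1 : ℝ), P.velocity (α ω))) μ := by
    have hΨ : Continuous fun q : (ℝ × E) × E => fderiv ℝ v q.1 ((1 : ℝ), q.2) :=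
      (hv.continuous_fderiv one_ne_zero |>.comp continuous_fst).clm_apply (by fun_prop)
    have hQ : IsCompact ((Icc 0 P.horizon ×ˢ K) ×ˢ Metric.closedBall (0 : E) M) :=
      (isCompact_Icc.prod hK).prod (isCompact_closedBall 0 M)
    refine integrable_comp_of_continuousOn_isCompact hQ hQ.measurableSet hΨ.continuousOn
      (hpt.prodMk (hP.measurable_velocity.comp_aemeasurable hα)) ?_
    filter_upwards [hptK] with ω hω
    exact ⟨hω, mem_closedBall_zero_iff.2 (hP.norm_velocity_le _)⟩
  have hvT : ∀ y, |v (P.horizon, y) - P.terminal y| ≤ e := fun y => by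
    simpa only [P.value_horizon] using hvalue (P.horizon, y) ⟨hT, le_rfl⟩
  have hend : ∫ y, v (P.horizon, y) ∂ν ≤ ∫ y, P.terminal y ∂ν + e * ν.real univ := by
    have hint : Integrable (fun y => v (P.horizon, y)) ν := by
      refine .of_bound (hv.continuous.comp (.prodMk_right P.horizon)).aestronglyMeasurable
        (e + C) (ae_of_all _ fun y => ?_)
      simpa using (abs_add_le (v (P.horizon, y) - P.terminal y) (P.terminal y)).trans
        (add_le_add (hvT y) (hP.abs_terminal_le y))
    exact integral_le_integral_add_const hint hterminal (ae_of_all _ fun y =>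
      sub_le_iff_le_add'.1 (abs_le.1 (hvT y)).2)
  have hrunning := integral_le_integral_add_const (e := e) hlag.neg hfderiv
    (hptK.mono fun ω hω => by
      simp only [Pi.neg_apply]
      linarith [hsub _ hω.1 (α ω)])
  simp only [Pi.neg_apply, integral_neg] at hrunning
  linarith [(abs_le.1 (hvalue (0, x₀) ⟨le_rfl, hT⟩)).1]

theorem value_le_integral (hP : P.IsRegular M C)
    {Ω : Type*} [MeasurableSpace Ω] {μ : Measure Ω} [IsFiniteMeasure μ]
    {ν : Measure E} [IsFiniteMeasure ν] {K : Set E} (hK : IsCompact K) {pt : Ω → ℝ × E} {α : Ω → A}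
    (hpt : AEMeasurable pt μ) (hα : AEMeasurable α μ)
    (hptK : ∀ᵐ ω ∂μ, pt ω ∈ Icc 0 P.horizon ×ˢ K) {x₀ : E} (hT : 0 ≤ P.horizon)
    (hliouville : ∀ v : ℝ × E → ℝ, ContDiff ℝ 1 v →
      v (0, x₀) + ∫ ω, fderiv ℝ v (pt ω) ((1 : ℝ), P.velocity (α ω)) ∂μ =
        ∫ y, v (P.horizon, y) ∂ν) :
    P.value (0, x₀) ≤ ∫ ω, P.lagrangian (α ω) (pt ω) ∂μ + ∫ y, P.terminal y ∂ν := by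
  refine le_of_forall_pos_le_add fun ε hε => ?_
  have hmass : 0 < 1 + μ.real univ + ν.real univ := by positivity
  obtain ⟨v, hv, hvalue, hsub⟩ := hP.exists_contDiff_subsolution (div_pos hε hmass)
  rw [← div_mul_cancel₀ ε hmass.ne']
  exact hP.value_le_integral_add hK hpt hα hptK hT hv hvalue hsub (hliouville v hv)

end Subsolution

end IsRegular

end BolzaProblem

end Bolza

section Truncation

variable {ι : Type*} {R : ℝ}

/-- The retraction of `ℝ^ι` onto the cube `[-R, R]^ι`, i.e. onto the closed `R`-ball of the
supremum norm. -/
def truncate (R : ℝ) (x : ι → ℝ) : ι → ℝ := fun i => max (-R) (min R (x i))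

lemma uniformContinuous_truncate (R : ℝ) : UniformContinuous (truncate (ι := ι) R) :=
  uniformContinuous_pi.2 fun i =>
    ((LipschitzWith.id.const_min R).const_max (-R)).uniformContinuous.comp
      (Pi.uniformContinuous_proj _ i)

variable [Fintype ι]

lemma truncate_mem_closedBall (hR : 0 ≤ R) (x : ι → ℝ) :
    truncate R x ∈ Metric.closedBall 0 R := by
  rw [mem_closedBall_zero_iff, pi_norm_le_iff_of_nonneg hR]
  exact fun i => abs_le.2 ⟨le_max_left _ _, max_le (by linarith) (min_le_left _ _)⟩

lemma truncate_of_norm_le {x : ι → ℝ} (hx : ‖x‖ ≤ R) : truncate R x = x := by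
  ext i
  have hxi := abs_le.1 ((norm_le_pi_norm x i).trans hx)
  rw [truncate, min_eq_right hxi.2, max_eq_right hxi.1]

end Truncation

section ControlSystem

variable {n m : ℕ} {T : ℝ} {X XT : Set (Fin n → ℝ)} {x₀ : Fin n → ℝ}
  {f : ℝ × (Fin n → ℝ) → Fin n → ℝ} {g : ℝ × (Fin n → ℝ) → Fin n → Fin m → ℝ}

lemma LFop_eq_fderiv (v : ℝ × (Fin n → ℝ) → ℝ) (z : ℝ × (Fin n → ℝ) × (Fin m → ℝ)) :
    LFop f g v z = fderiv ℝ v (z.1, z.2.1) ((1 : ℝ), Fvec f g z) := by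
  have hsplit : ((1 : ℝ), Fvec f g z) = ((1 : ℝ), (0 : Fin n → ℝ)) +
      ∑ k, Fvec f g z k • ((0 : ℝ), (Pi.single k (1 : ℝ) : Fin n → ℝ)) := by
    ext i
    · simp [Prod.fst_sum]
    · simp [Prod.snd_sum, Finset.sum_apply, Pi.single_apply]
  simp only [LFop, hsplit, map_add, map_sum, map_smul, smul_eq_mul, mul_comm]

lemma continuousOn_Fvec {s : Set ℝ} (hf : ContinuousOn f (s ×ˢ univ))
    (hg : ContinuousOn g (s ×ˢ univ)) : ContinuousOn (Fvec f g) (s ×ˢ univ) := by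
  have hp : ContinuousOn (fun z : ℝ × (Fin n → ℝ) × (Fin m → ℝ) => (z.1, z.2.1)) (s ×ˢ univ) := by
    fun_prop
  have hmaps : MapsTo (fun z : ℝ × (Fin n → ℝ) × (Fin m → ℝ) => (z.1, z.2.1)) (s ×ˢ univ)
      (s ×ˢ univ) := fun _ hz => ⟨hz.1, mem_univ _⟩
  exact continuousOn_pi.2 fun k => ((continuousOn_pi.1 hf k).comp hp hmaps).add
    (continuousOn_finsetSum _ fun j _ => ContinuousOn.mul
      ((continuousOn_pi.1 (continuousOn_pi.1 hg k) j).comp hp hmaps) (by fun_prop))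

lemma isCompact_Ubox (m : ℕ) : IsCompact (Ubox m) := isCompact_Icc

lemma Ubox_eq_closedBall (m : ℕ) : Ubox m = Metric.closedBall 0 1 := by
  ext u
  simp only [Ubox, mem_Icc, Pi.le_def, ← forall_and, mem_closedBall_zero_iff,
    pi_norm_le_iff_of_nonneg zero_le_one, Real.norm_eq_abs, abs_le]

variable (f g) (h : ℝ × (Fin n → ℝ) × (Fin m → ℝ) → ℝ) (H : (Fin n → ℝ) → ℝ) (X XT)

/-- The running cost at `((t, x), (u, q))` when the velocity `q` is chosen freely: deviations of
`q` from `F(t, x, u)` and of `x` from `X` are charged at rate `κ`. -/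
def penalizedLagrangian (κ : ℝ) (z : (ℝ × (Fin n → ℝ)) × (Fin m → ℝ) × (Fin n → ℝ)) : ℝ :=
  h (z.1.1, z.1.2, z.2.1) +
    κ * (‖z.2.2 - Fvec f g (z.1.1, z.1.2, z.2.1)‖ + Metric.infDist z.1.2 X)

/-- The problem without state constraints whose controls are pairs `(u, q)` of a control and a
velocity, the dynamics `q = F(t, x, u)` and the constraints `x ∈ X`, `x(T) ∈ X_T` being penalized at
rate `κ`. Truncation to `‖x‖ ≤ R`, `‖u‖ ≤ 1`, `‖q‖ ≤ M` makes the data bounded and uniformly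
continuous without changing them in the region of interest. -/
def penalizedProblem (hT : 0 ≤ T) (R M κ : ℝ) :
    BolzaProblem (Fin n → ℝ) ((Fin m → ℝ) × (Fin n → ℝ)) where
  horizon := T
  velocity a := truncate M a.2
  lagrangian a p := penalizedLagrangian X f g h κ
    ((projIcc 0 T hT p.1, truncate R p.2), truncate 1 a.1, truncate M a.2)
  terminal x := H (truncate R x) + κ * Metric.infDist (truncate R x) XT

variable {f g h H X XT} {R M κ : ℝ}

lemma penalizedProblem_lagrangian (hT : 0 ≤ T) {t : ℝ} {x : Fin n → ℝ} (ht : t ∈ Icc 0 T)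
    (hx : ‖x‖ ≤ R) (a : (Fin m → ℝ) × (Fin n → ℝ)) :
    (penalizedProblem X XT f g h H hT R M κ).lagrangian a (t, x) =
      penalizedLagrangian X f g h κ ((t, x), (truncate 1 a.1, truncate M a.2)) := by
  simp only [penalizedProblem, projIcc_of_mem hT ht, truncate_of_norm_le hx]

lemma penalizedProblem_terminal (hT : 0 ≤ T) {x : Fin n → ℝ} (hx : ‖x‖ ≤ R) :
    (penalizedProblem X XT f g h H hT R M κ).terminal x = H x + κ * Metric.infDist x XT := by
  simp only [penalizedProblem, truncate_of_norm_le hx]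

lemma continuousOn_penalizedLagrangian (hF : ContinuousOn (Fvec f g) (Icc 0 T ×ˢ univ))
    (hh : Continuous h) :
    ContinuousOn (penalizedLagrangian X f g h κ) ((Icc 0 T ×ˢ univ) ×ˢ univ) := by
  have hFcomp : ContinuousOn (fun z : (ℝ × (Fin n → ℝ)) × (Fin m → ℝ) × (Fin n → ℝ) =>
      Fvec f g (z.1.1, z.1.2, z.2.1)) ((Icc 0 T ×ˢ univ) ×ˢ univ) :=
    hF.comp (by fun_prop) fun z hz => ⟨hz.1.1, mem_univ _⟩
  have hdist : Continuous fun x => Metric.infDist x X := Metric.continuous_infDist_pt X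
  exact (hh.comp (by fun_prop)).continuousOn.add (continuousOn_const.mul
    ((ContinuousOn.sub (by fun_prop) hFcomp).norm.add (hdist.comp (by fun_prop)).continuousOn))

lemma exists_isRegular_penalizedProblem (hT : 0 ≤ T) (hR : 0 ≤ R) (hM : 0 ≤ M)
    (hF : ContinuousOn (Fvec f g) (Icc 0 T ×ˢ univ)) (hh : Continuous h) (hH : Continuous H) :
    ∃ C, (penalizedProblem X XT f g h H hT R M κ).IsRegular M C := by
  let π : (ℝ × (Fin n → ℝ)) × (Fin m → ℝ) × (Fin n → ℝ) →
      (ℝ × (Fin n → ℝ)) × (Fin m → ℝ) × (Fin n → ℝ) := fun z =>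
    ((projIcc 0 T hT z.1.1, truncate R z.1.2), truncate 1 z.2.1, truncate M z.2.2)
  have hπ : UniformContinuous π :=
    (((uniformContinuous_subtype_val.comp (LipschitzWith.projIcc hT).uniformContinuous).prodMap
      (uniformContinuous_truncate R)).comp uniformContinuous_fst).prodMk
      (((uniformContinuous_truncate 1).prodMap (uniformContinuous_truncate M)).comp
        uniformContinuous_snd)
  have hL : ContinuousOn (penalizedLagrangian X f g h κ)
      ((Icc 0 T ×ˢ Metric.closedBall 0 R) ×ˢ Metric.closedBall 0 1 ×ˢ Metric.closedBall 0 M) :=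
    (continuousOn_penalizedLagrangian hF hh).mono fun z hz => ⟨⟨hz.1.1, mem_univ _⟩, mem_univ _⟩
  have hG : Continuous fun x => H x + κ * Metric.infDist x XT :=
    hH.add (continuous_const.mul (Metric.continuous_infDist_pt XT))
  obtain ⟨hLπ, C₁, hC₁⟩ := uniformContinuous_comp_and_exists_bound_of_isCompact
    ((isCompact_Icc.prod (isCompact_closedBall 0 R)).prod
      ((isCompact_closedBall 0 1).prod (isCompact_closedBall 0 M))) hL hπ fun z =>
    ⟨⟨(projIcc 0 T hT z.1.1).2, truncate_mem_closedBall hR _⟩,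
      truncate_mem_closedBall zero_le_one _, truncate_mem_closedBall hM _⟩
  obtain ⟨hGπ, C₂, hC₂⟩ := uniformContinuous_comp_and_exists_bound_of_isCompact
    (isCompact_closedBall 0 R) hG.continuousOn (uniformContinuous_truncate R)
    (truncate_mem_closedBall hR)
  exact ⟨max C₁ C₂, {
    measurable_velocity := (uniformContinuous_truncate M).continuous.measurable.comp measurable_snd
    norm_velocity_le := fun a => mem_closedBall_zero_iff.1 (truncate_mem_closedBall hM a.2)
    measurable_lagrangian := (hLπ.continuous.comp continuous_swap).measurable
    abs_lagrangian_le := fun a p => (hC₁ (p, a)).trans (le_max_left _ _)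
    uniformEquicontinuous_lagrangian := Metric.uniformEquicontinuous_iff.2 fun e he => by
      obtain ⟨d, hd, hLd⟩ := Metric.uniformContinuous_iff.1 hLπ e he
      exact ⟨d, hd, fun p q hpq a => hLd (a := (p, a)) (b := (q, a)) (by
        simpa [Prod.dist_eq (α := ℝ × (Fin n → ℝ))] using hpq)⟩
    abs_terminal_le := fun x => (hC₂ x).trans (le_max_right _ _)
    uniformContinuous_terminal := hGπ }⟩

lemma penalizedProblem_value_le_Qcost (hT : 0 ≤ T) (hX : IsCompact X) (hM₀ : 0 ≤ M)
    (hF : ContinuousOn (Fvec f g) (Icc 0 T ×ˢ univ)) (hh : Continuous h) (hH : Continuous H)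
    (hM : ∀ z ∈ Icc 0 T ×ˢ X ×ˢ Ubox m, ‖Fvec f g z‖ ≤ M) (hR₀ : 0 ≤ R) (hRX : ∀ y ∈ X, ‖y‖ ≤ R)
    (hRXT : ∀ y ∈ XT, ‖y‖ ≤ R) {η : Measure (ℝ × (Fin n → ℝ) × (Fin m → ℝ))}
    {ηT : Measure (Fin n → ℝ)} (hη : QFeasible T X XT x₀ f g η ηT) :
    (penalizedProblem X XT f g h H hT R M κ).value (0, x₀) ≤ Qcost h H η ηT := by
  obtain ⟨_, _, hηX, hηXT, hliouville⟩ := hη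
  let P := penalizedProblem X XT f g h H hT R M κ
  obtain ⟨C, hP⟩ : ∃ C, P.IsRegular M C := exists_isRegular_penalizedProblem hT hR₀ hM₀ hF hh hH
  have hsupp : ∀ᵐ z ∂η, z ∈ Icc 0 T ×ˢ X ×ˢ Ubox m := hηX
  have hsuppT : ∀ᵐ y ∂ηT, y ∈ XT := hηXT
  have hFmeas : AEMeasurable (Fvec f g) η := by
    have hQ : IsCompact (Icc 0 T ×ˢ X ×ˢ Ubox m) := isCompact_Icc.prod (hX.prod (isCompact_Ubox m))
    rw [← Measure.restrict_eq_self_of_ae_mem hsupp]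
    exact (hF.mono (prod_mono_right (subset_univ _))).aemeasurable hQ.measurableSet
  have hvel : ∀ᵐ z ∂η, P.velocity (z.2.2, Fvec f g z) = Fvec f g z :=
    hsupp.mono fun z hz => truncate_of_norm_le (hM z hz)
  have hlag : ∀ᵐ z ∂η, P.lagrangian (z.2.2, Fvec f g z) (z.1, z.2.1) = h z := by
    filter_upwards [hsupp] with z hz
    have hzU : ‖z.2.2‖ ≤ 1 := mem_closedBall_zero_iff.1 (Ubox_eq_closedBall m ▸ hz.2.2)
    rw [penalizedProblem_lagrangian hT hz.1 (hRX _ hz.2.1), truncate_of_norm_le hzU,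
      truncate_of_norm_le (hM z hz)]
    simp [penalizedLagrangian, Metric.infDist_zero_of_mem hz.2.1]
  have hterm : ∀ᵐ y ∂ηT, P.terminal y = H y := by
    filter_upwards [hsuppT] with y hy
    rw [penalizedProblem_terminal hT (hRXT y hy), Metric.infDist_zero_of_mem hy, mul_zero, add_zero]
  have hptK : ∀ᵐ z ∂η, (z.1, z.2.1) ∈ Icc 0 P.horizon ×ˢ X :=
    hsupp.mono fun z hz => ⟨hz.1, hz.2.1⟩
  have hliouville' : ∀ v : ℝ × (Fin n → ℝ) → ℝ, ContDiff ℝ 1 v →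
      v (0, x₀) + ∫ z, fderiv ℝ v (z.1, z.2.1) ((1 : ℝ), P.velocity (z.2.2, Fvec f g z)) ∂η =
        ∫ y, v (P.horizon, y) ∂ηT := fun v hv => by
    refine Eq.trans ?_ (hliouville v hv)
    rw [integral_congr_ae (hvel.mono fun z hz => by rw [hz, ← LFop_eq_fderiv])]
  have hvalue := hP.value_le_integral hX (by fun_prop)
    (measurable_snd.snd.aemeasurable.prodMk hFmeas) hptK hT hliouville'
  rwa [integral_congr_ae hlag, integral_congr_ae hterm] at hvalue

end ControlSystem

section ApproximateAdmissibility

open scoped NNReal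

variable {n m : ℕ} {T : ℝ} {X XT : Set (Fin n → ℝ)} {x₀ : Fin n → ℝ}
  {f : ℝ × (Fin n → ℝ) → Fin n → ℝ} {g : ℝ × (Fin n → ℝ) → Fin n → Fin m → ℝ}
  {h : ℝ × (Fin n → ℝ) × (Fin m → ℝ) → ℝ} {H : (Fin n → ℝ) → ℝ}
  {x : ℝ → Fin n → ℝ} {u : ℝ → Fin m → ℝ} {M : ℝ≥0} {κ : ℝ}

variable (T X XT x₀ f g M) in
/-- `(x, u)` violates the dynamics, the state constraint and the terminal constraint by at most `ε`,
the first uniformly in time and the second in the mean. The speed of `x` is at most `M`. -/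
structure IsApproxAdmissible (ε : ℝ) (x : ℝ → Fin n → ℝ) (u : ℝ → Fin m → ℝ) : Prop where
  measurable : Measurable u
  mem_Ubox : ∀ t ∈ Icc 0 T, u t ∈ Ubox m
  initial : x 0 = x₀
  lipschitzOnWith : LipschitzOnWith M x (Icc 0 T)
  norm_defect_le : ∀ t ∈ Icc 0 T, ‖x t - x₀ - ∫ s in Icc 0 t, Fvec f g (s, x s, u s)‖ ≤ ε
  integral_infDist_le : ∫ t in Icc 0 T, Metric.infDist (x t) X ≤ ε
  infDist_le : Metric.infDist (x T) XT ≤ ε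

lemma lipschitzOnWith_of_eq_add_integral {E : Type*} [NormedAddCommGroup E] [NormedSpace ℝ E]
    {x q : ℝ → E} {x₀ : E} {a b : ℝ} (hq : IntegrableOn q (Icc a b))
    (hqM : ∀ t ∈ Icc a b, ‖q t‖ ≤ M) (hx : ∀ t ∈ Icc a b, x t = x₀ + ∫ s in Icc a t, q s) :
    LipschitzOnWith M x (Icc a b) := by
  refine .of_dist_le_mul fun s hs t ht => ?_
  have hint : ∀ r ∈ Icc a b, IntervalIntegrable q volume a r := fun r hr =>
    (intervalIntegrable_iff_integrableOn_Icc_of_le hr.1).2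
      (hq.mono_set (Icc_subset_Icc_right hr.2))
  have hsub : x s - x t = ∫ r in t..s, q r := by
    rw [hx s hs, hx t ht, add_sub_add_left_eq_sub, integral_Icc_eq_integral_Ioc,
      integral_Icc_eq_integral_Ioc, ← intervalIntegral.integral_of_le hs.1,
      ← intervalIntegral.integral_of_le ht.1,
      intervalIntegral.integral_interval_sub_left (hint s hs) (hint t ht)]
  rw [dist_eq_norm, hsub, Real.dist_eq]
  exact intervalIntegral.norm_integral_le_of_norm_le_const fun r hr =>
    hqM r (uIcc_subset_Icc ht hs (uIoc_subset_uIcc hr))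

lemma integrableOn_comp_of_mem_Ubox {G : Type*} [NormedAddCommGroup G]
    {Ψ : ℝ × (Fin n → ℝ) × (Fin m → ℝ) → G} (hΨ : ContinuousOn Ψ (Icc 0 T ×ˢ univ))
    (hx : ContinuousOn x (Icc 0 T)) (hu : Measurable u) (huU : ∀ t ∈ Icc 0 T, u t ∈ Ubox m) :
    IntegrableOn (fun t => Ψ (t, x t, u t)) (Icc 0 T) := by
  have hQ : IsCompact (Icc 0 T ×ˢ (x '' Icc 0 T) ×ˢ Ubox m) :=
    isCompact_Icc.prod ((isCompact_Icc.image_of_continuousOn hx).prod (isCompact_Ubox m))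
  exact integrable_comp_of_continuousOn_isCompact hQ hQ.measurableSet
    (hΨ.mono (prod_mono_right (subset_univ _)))
    (aemeasurable_id.prodMk ((hx.aemeasurable measurableSet_Icc).prodMk hu.aemeasurable))
    ((ae_restrict_mem measurableSet_Icc).mono fun t ht => ⟨ht, mem_image_of_mem x ht, huU t ht⟩)

lemma exists_forall_norm_Fvec_le (hX : IsCompact X)
    (hF : ContinuousOn (Fvec f g) (Icc 0 T ×ˢ univ)) :
    ∃ M : ℝ≥0, ∀ z ∈ Icc 0 T ×ˢ X ×ˢ Ubox m, ‖Fvec f g z‖ ≤ M := by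
  obtain ⟨C, hC⟩ := (isCompact_Icc.prod (hX.prod (isCompact_Ubox m))).exists_bound_of_continuousOn
    (hF.mono (prod_mono_right (subset_univ _)))
  exact ⟨C.toNNReal, fun z hz => (hC z hz).trans (Real.le_coe_toNNReal C)⟩

lemma integral_penalizedLagrangian (hF : ContinuousOn (Fvec f g) (Icc 0 T ×ˢ univ))
    (hh : Continuous h) (hx : ContinuousOn x (Icc 0 T)) (hu : Measurable u)
    (huU : ∀ t ∈ Icc 0 T, u t ∈ Ubox m) {q : ℝ → Fin n → ℝ} (hq : IntegrableOn q (Icc 0 T)) :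
    ∫ t in Icc 0 T, penalizedLagrangian X f g h κ ((t, x t), (u t, q t)) =
      (∫ t in Icc 0 T, h (t, x t, u t)) +
        κ * ((∫ t in Icc 0 T, ‖q t - Fvec f g (t, x t, u t)‖) +
          ∫ t in Icc 0 T, Metric.infDist (x t) X) := by
  have hhint := integrableOn_comp_of_mem_Ubox hh.continuousOn hx hu huU
  have hdefect : IntegrableOn (fun t => ‖q t - Fvec f g (t, x t, u t)‖) (Icc 0 T) :=
    (hq.sub (integrableOn_comp_of_mem_Ubox hF hx hu huU)).norm
  have hdist : IntegrableOn (fun t => Metric.infDist (x t) X) (Icc 0 T) :=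
    ((Metric.continuous_infDist_pt X).comp_continuousOn hx).integrableOn_Icc
  have hsum := integral_add hhint ((hdefect.add hdist).const_mul κ)
  rw [integral_const_mul] at hsum
  exact hsum.trans (by rw [← integral_add hdefect hdist]; rfl)

lemma isApproxAdmissible_of_eq_add_integral (hT : 0 ≤ T)
    (hF : ContinuousOn (Fvec f g) (Icc 0 T ×ˢ univ)) (hu : Measurable u)
    (huU : ∀ t ∈ Icc 0 T, u t ∈ Ubox m) {q : ℝ → Fin n → ℝ} (hq : IntegrableOn q (Icc 0 T))
    (hqM : ∀ t ∈ Icc 0 T, ‖q t‖ ≤ M) (hx : ∀ t ∈ Icc 0 T, x t = x₀ + ∫ s in Icc 0 t, q s) :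
    IsApproxAdmissible T X XT x₀ f g M ((∫ t in Icc 0 T, ‖q t - Fvec f g (t, x t, u t)‖) +
      (∫ t in Icc 0 T, Metric.infDist (x t) X) + Metric.infDist (x T) XT) x u := by
  have hlip := lipschitzOnWith_of_eq_add_integral hq hqM hx
  have hqF := hq.sub (integrableOn_comp_of_mem_Ubox hF hlip.continuousOn hu huU)
  have hdefect : 0 ≤ ∫ t in Icc 0 T, ‖q t - Fvec f g (t, x t, u t)‖ :=
    integral_nonneg fun _ => norm_nonneg _
  have hdist : 0 ≤ ∫ t in Icc 0 T, Metric.infDist (x t) X :=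
    integral_nonneg fun _ => Metric.infDist_nonneg
  have hdistT : 0 ≤ Metric.infDist (x T) XT := Metric.infDist_nonneg
  refine ⟨hu, huU, ?_, hlip, fun t ht => ?_, by linarith, by linarith⟩
  · simpa using hx 0 ⟨le_rfl, hT⟩
  · have hsub : Icc 0 t ⊆ Icc 0 T := Icc_subset_Icc_right ht.2
    calc ‖x t - x₀ - ∫ s in Icc 0 t, Fvec f g (s, x s, u s)‖
      _ = ‖∫ s in Icc 0 t, (q s - Fvec f g (s, x s, u s))‖ := by
        rw [hx t ht, add_sub_cancel_left, integral_sub (hq.mono_set hsub)]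
        exact (integrableOn_comp_of_mem_Ubox hF hlip.continuousOn hu huU).mono_set hsub
      _ ≤ ∫ s in Icc 0 t, ‖q s - Fvec f g (s, x s, u s)‖ := norm_integral_le_integral_norm _
      _ ≤ ∫ s in Icc 0 T, ‖q s - Fvec f g (s, x s, u s)‖ :=
        setIntegral_mono_set hqF.norm (ae_of_all _ fun _ => norm_nonneg _) hsub.eventuallyLE
      _ ≤ _ := by linarith

lemma IsAdmissiblePair.isApproxAdmissible (hT : 0 ≤ T)
    (hF : ContinuousOn (Fvec f g) (Icc 0 T ×ˢ univ))
    (hM : ∀ z ∈ Icc 0 T ×ˢ X ×ˢ Ubox m, ‖Fvec f g z‖ ≤ M)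
    (hxu : IsAdmissiblePair T X XT x₀ f g x u) : IsApproxAdmissible T X XT x₀ f g M 0 x u := by
  obtain ⟨hu, huU, -, hxT, hxX, hint, hx⟩ := hxu
  have := isApproxAdmissible_of_eq_add_integral (X := X) (XT := XT) hT hF hu huU hint
    (fun t ht => hM _ ⟨ht, hxX t ht, huU t ht⟩) hx
  have hdist : ∫ t in Icc 0 T, Metric.infDist (x t) X = 0 :=
    setIntegral_eq_zero_of_forall_eq_zero fun t ht => Metric.infDist_zero_of_mem (hxX t ht)
  simpa only [sub_self, norm_zero, integral_zero, hdist, Metric.infDist_zero_of_mem hxT,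
    add_zero] using this

lemma IsAdmissiblePair.exists_lipschitzOnWith (hX : IsCompact X)
    (hF : ContinuousOn (Fvec f g) (Icc 0 T ×ˢ univ)) (hxu : IsAdmissiblePair T X XT x₀ f g x u) :
    ∃ M : ℝ≥0, LipschitzOnWith M x (Icc 0 T) := by
  obtain ⟨M, hM⟩ := exists_forall_norm_Fvec_le hX hF
  obtain ⟨-, huU, -, -, hxX, hint, hx⟩ := hxu
  exact ⟨M, lipschitzOnWith_of_eq_add_integral hint
    (fun t ht => hM _ ⟨ht, hxX t ht, huU t ht⟩) hx⟩

lemma IsApproxAdmissible.nonneg {ε : ℝ} (hxu : IsApproxAdmissible T X XT x₀ f g M ε x u) :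
    0 ≤ ε :=
  Metric.infDist_nonneg.trans hxu.infDist_le

lemma IsApproxAdmissible.mapsTo_closedBall {ε : ℝ}
    (hxu : IsApproxAdmissible T X XT x₀ f g M ε x u) :
    MapsTo x (Icc 0 T) (Metric.closedBall 0 (‖x₀‖ + M * T)) := by
  intro t ht
  have hdist := hxu.lipschitzOnWith.dist_le_mul t ht 0 ⟨le_rfl, ht.1.trans ht.2⟩
  rw [hxu.initial, dist_eq_norm, Real.dist_eq, sub_zero, abs_of_nonneg ht.1] at hdist
  rw [mem_closedBall_zero_iff]
  calc ‖x t‖ ≤ ‖x₀‖ + ‖x t - x₀‖ := norm_le_insert' _ _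
    _ ≤ ‖x₀‖ + M * T := by gcongr; exact hdist.trans (by gcongr; exact ht.2)

lemma IsApproxAdmissible.exists_le_Jcost (hT : 0 ≤ T) (hh : Continuous h) (hH : Continuous H) :
    ∃ B, ∀ ε x u, IsApproxAdmissible T X XT x₀ f g M ε x u → B ≤ Jcost T h H x u := by
  have hball := isCompact_closedBall (0 : Fin n → ℝ) (‖x₀‖ + M * T)
  obtain ⟨C, hC⟩ := (isCompact_Icc.prod
    (hball.prod (isCompact_Ubox m))).exists_bound_of_continuousOn hh.continuousOn
  obtain ⟨D, hD⟩ := hball.exists_bound_of_continuousOn hH.continuousOn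
  refine ⟨-(C * volume.real (Icc 0 T)) - D, fun ε x u hxu => ?_⟩
  have hrun := norm_setIntegral_le_of_norm_le_const (μ := volume) (s := Icc 0 T) (by simp)
    fun t ht => hC (t, x t, u t) ⟨ht, hxu.mapsTo_closedBall ht, hxu.mem_Ubox t ht⟩
  have hterm := hD _ (hxu.mapsTo_closedBall ⟨hT, le_rfl⟩)
  rw [Jcost]
  linarith [neg_le_of_abs_le hrun, neg_le_of_abs_le hterm]

lemma exists_isApproxAdmissible_and_eq_penalizedProblem_cost (hT : 0 ≤ T)
    (hF : ContinuousOn (Fvec f g) (Icc 0 T ×ˢ univ)) (hh : Continuous h) (hH : Continuous H)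
    {R : ℝ} (hR : ∀ y ∈ Metric.closedBall x₀ (M * T), ‖y‖ ≤ R)
    {c : ℝ → (Fin m → ℝ) × (Fin n → ℝ)} (hc : Measurable c) :
    ∃ x u ε, IsApproxAdmissible T X XT x₀ f g M ε x u ∧
      Jcost T h H x u + κ * ε = (penalizedProblem X XT f g h H hT R M κ).cost (0, x₀) c := by
  let P := penalizedProblem X XT f g h H hT R M κ
  have hR₀ : 0 ≤ R := (norm_nonneg x₀).trans (hR x₀ (Metric.mem_closedBall_self (by positivity)))
  obtain ⟨C, hP⟩ : ∃ C, P.IsRegular M C := exists_isRegular_penalizedProblem hT hR₀ M.2 hF hh hH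
  let x := P.traj (0, x₀) c
  let u : ℝ → Fin m → ℝ := fun t => truncate 1 (c t).1
  have hu : Measurable u := (uniformContinuous_truncate 1).continuous.measurable.comp hc.fst
  have huU : ∀ t ∈ Icc 0 T, u t ∈ Ubox m := fun t _ =>
    Ubox_eq_closedBall m ▸ truncate_mem_closedBall zero_le_one _
  have hq : IntegrableOn (fun t => P.velocity (c t)) (Icc 0 T) :=
    (intervalIntegrable_iff_integrableOn_Icc_of_le hT).1 (hP.intervalIntegrable_velocity hc 0 T)
  have hx : ∀ t ∈ Icc 0 T, x t = x₀ + ∫ s in Icc 0 t, P.velocity (c s) := fun t ht => by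
    rw [integral_Icc_eq_integral_Ioc, ← intervalIntegral.integral_of_le ht.1]
    rfl
  have hxR : ∀ t ∈ Icc 0 T, ‖x t‖ ≤ R := fun t ht => hR _ <| by
    have := hP.norm_traj_sub_le (0, x₀) c t
    rw [sub_zero, abs_of_nonneg ht.1] at this
    rw [mem_closedBall_iff_norm]
    exact this.trans (by gcongr; exact ht.2)
  refine ⟨x, u, _, isApproxAdmissible_of_eq_add_integral hT hF hu huU hq
    (fun t _ => hP.norm_velocity_le _) hx, Eq.symm ?_⟩
  have hcost : P.cost (0, x₀) c = (∫ t in Icc 0 T, penalizedLagrangian X f g h κ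
      ((t, x t), (u t, P.velocity (c t)))) + (H (x T) + κ * Metric.infDist (x T) XT) := by
    rw [← penalizedProblem_terminal hT (hxR T ⟨hT, le_rfl⟩), integral_Icc_eq_integral_Ioc,
      ← intervalIntegral.integral_of_le hT]
    refine congrArg (· + _) (intervalIntegral.integral_congr fun t ht => ?_)
    exact penalizedProblem_lagrangian hT (uIcc_of_le hT ▸ ht) (hxR t (uIcc_of_le hT ▸ ht)) (c t)
  rw [hcost, integral_penalizedLagrangian hF hh
    (hP.continuous_traj hc (0, x₀)).continuousOn hu huU hq, Jcost]
  ring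

lemma exists_isApproxAdmissible (hT : 0 ≤ T) (hX : IsCompact X) (hXT : IsCompact XT)
    (hF : ContinuousOn (Fvec f g) (Icc 0 T ×ˢ univ)) (hh : Continuous h) (hH : Continuous H)
    (hM : ∀ z ∈ Icc 0 T ×ˢ X ×ˢ Ubox m, ‖Fvec f g z‖ ≤ M)
    {η : Measure (ℝ × (Fin n → ℝ) × (Fin m → ℝ))} {ηT : Measure (Fin n → ℝ)}
    (hη : QFeasible T X XT x₀ f g η ηT) (κ : ℝ) {e : ℝ} (he : 0 < e) :
    ∃ x u ε, IsApproxAdmissible T X XT x₀ f g M ε x u ∧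
      Jcost T h H x u + κ * ε ≤ Qcost h H η ηT + e := by
  obtain ⟨R, hR₀, hR⟩ := ((hX.union hXT).union
    (isCompact_closedBall x₀ (M * T))).isBounded.exists_pos_norm_le
  have hvalue : (penalizedProblem X XT f g h H hT R M κ).value (0, x₀) < Qcost h H η ηT + e :=
    (penalizedProblem_value_le_Qcost hT hX M.2 hF hh hH hM hR₀.le
      (fun y hy => hR y (.inl (.inl hy))) (fun y hy => hR y (.inl (.inr hy))) hη).trans_lt
      (lt_add_of_pos_right _ he)
  have : Nonempty {c : ℝ → (Fin m → ℝ) × (Fin n → ℝ) // Measurable c} :=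
    ⟨fun _ => 0, measurable_const⟩
  obtain ⟨⟨c, hc⟩, hcost⟩ := exists_lt_of_ciInf_lt hvalue
  obtain ⟨x, u, ε, hxu, hJ⟩ := exists_isApproxAdmissible_and_eq_penalizedProblem_cost
    (X := X) (XT := XT) (κ := κ) hT hF hh hH (fun y hy => hR y (.inr hy)) hc
  exact ⟨x, u, ε, hxu, hJ.trans_le hcost.le⟩

end ApproximateAdmissibility

section Compactness

open Filter Topology
open scoped InnerProductSpace NNReal

variable {ι : Type*} {n m : ℕ} {T : ℝ} {X XT : Set (Fin n → ℝ)} {x₀ : Fin n → ℝ}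
  {f : ℝ × (Fin n → ℝ) → Fin n → ℝ} {g : ℝ × (Fin n → ℝ) → Fin n → Fin m → ℝ}
  {h : ℝ × (Fin n → ℝ) × (Fin m → ℝ) → ℝ} {H : (Fin n → ℝ) → ℝ}
  {x : ι → ℝ → Fin n → ℝ} {u : ι → ℝ → Fin m → ℝ} {φ : ℝ → Fin n → ℝ} {w : ℝ → Fin m → ℝ}
  {M : ℝ≥0}

/-- The bounded controlled trajectories `(x i, u i)` converge to `(φ, w)` along `l`: uniformly on
`[0, T]` for the trajectories, weakly in `L²` for the controls, which are regarded as valued in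
`EuclideanSpace` for that purpose. -/
structure TendstoControlled (T : ℝ) (x : ι → ℝ → Fin n → ℝ) (u : ι → ℝ → Fin m → ℝ)
    (l : Filter ι) (φ : ℝ → Fin n → ℝ) (w : ℝ → Fin m → ℝ) : Prop where
  measurable : ∀ i, Measurable (u i)
  mem_Ubox : ∀ i, ∀ t ∈ Icc 0 T, u i t ∈ Ubox m
  continuousOn : ∀ i, ContinuousOn (x i) (Icc 0 T)
  bounded : ∃ R, ∀ i, MapsTo (x i) (Icc 0 T) (Metric.closedBall 0 R)
  measurable_limit : Measurable w
  limit_mem_Ubox : ∀ t, w t ∈ Ubox m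
  tendstoUniformlyOn : TendstoUniformlyOn x φ l (Icc 0 T)
  tendstoWeaklyL2 : TendstoWeaklyL2 (fun i t => WithLp.toLp 2 (u i t)) l
    (fun t => WithLp.toLp 2 (w t)) (volume.restrict (Icc 0 T))

lemma isClosed_toLp_Ubox (m : ℕ) : IsClosed (WithLp.ofLp (p := 2) ⁻¹' Ubox m) :=
  (isCompact_Ubox m).isClosed.preimage (PiLp.continuous_ofLp 2 _)

lemma convex_toLp_Ubox (m : ℕ) : Convex ℝ (WithLp.ofLp (p := 2) ⁻¹' Ubox m) :=
  (convex_Icc _ _).linear_preimage (WithLp.linearEquiv 2 ℝ (Fin m → ℝ)).toLinearMap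

lemma isBounded_toLp_Ubox (m : ℕ) : Bornology.IsBounded (WithLp.ofLp (p := 2) ⁻¹' Ubox m) := by
  rw [Ubox_eq_closedBall]
  exact (PiLp.antilipschitzWith_ofLp 2 _).isBounded_preimage Metric.isBounded_closedBall

lemma memLp_toLp_of_mem_Ubox (hw : Measurable w) (hwU : ∀ t ∈ Icc 0 T, w t ∈ Ubox m) :
    MemLp (fun t => WithLp.toLp 2 (w t)) 2 (volume.restrict (Icc 0 T)) := by
  obtain ⟨R, hR⟩ := (isBounded_toLp_Ubox m).exists_norm_le
  exact .of_bound ((PiLp.continuous_toLp 2 _).measurable.comp hw).aestronglyMeasurable R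
    ((ae_restrict_mem measurableSet_Icc).mono fun t ht => hR _ (hwU t ht))

lemma exists_tendstoWeaklyL2_of_mem_Ubox (𝓤 : Ultrafilter ι) (hu : ∀ i, Measurable (u i))
    (huU : ∀ i, ∀ t ∈ Icc 0 T, u i t ∈ Ubox m) :
    ∃ w : ℝ → Fin m → ℝ, Measurable w ∧ (∀ t, w t ∈ Ubox m) ∧
      TendstoWeaklyL2 (fun i t => WithLp.toLp 2 (u i t)) 𝓤 (fun t => WithLp.toLp 2 (w t))
        (volume.restrict (Icc 0 T)) := by
  obtain ⟨w, hw, hwU, huw⟩ := exists_measurable_forall_mem_tendstoWeaklyL2 𝓤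
    (u := fun i t => WithLp.toLp 2 (u i t)) (μ := volume.restrict (Icc 0 T))
    (fun i => ((PiLp.continuous_toLp 2 _).measurable.comp (hu i)).aestronglyMeasurable)
    (isClosed_toLp_Ubox m) (convex_toLp_Ubox m) (isBounded_toLp_Ubox m)
    ⟨0, by simp [Ubox, Pi.le_def]⟩
    (fun i => (ae_restrict_mem measurableSet_Icc).mono fun t ht => huU i t ht)
  exact ⟨fun t => WithLp.ofLp (w t), (PiLp.continuous_ofLp 2 _).measurable.comp hw, hwU, huw⟩

lemma exists_tendstoControlled (𝓤 : Ultrafilter ι) {ε : ι → ℝ}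
    (hxu : ∀ i, IsApproxAdmissible T X XT x₀ f g M (ε i) (x i) (u i)) :
    ∃ φ w, TendstoControlled T x u 𝓤 φ w := by
  obtain ⟨w, hw, hwU, huw⟩ := exists_tendstoWeaklyL2_of_mem_Ubox 𝓤 (fun i => (hxu i).measurable)
    (fun i => (hxu i).mem_Ubox)
  obtain ⟨φ, -, hφ⟩ := exists_lipschitzOnWith_tendstoUniformlyOn isCompact_Icc
    (isCompact_closedBall _ _) (𝓤 := 𝓤) (fun i => (hxu i).lipschitzOnWith)
    fun i => (hxu i).mapsTo_closedBall
  exact ⟨φ, w, fun i => (hxu i).measurable, fun i => (hxu i).mem_Ubox,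
    fun i => (hxu i).lipschitzOnWith.continuousOn, ⟨_, fun i => (hxu i).mapsTo_closedBall⟩,
    hw, hwU, hφ, huw⟩

lemma memLp_toLp_comp (hg : ContinuousOn g (Icc 0 T ×ˢ univ)) (hφ : ContinuousOn φ (Icc 0 T))
    (k : Fin n) : MemLp (fun s => WithLp.toLp 2 (g (s, φ s) k)) 2 (volume.restrict (Icc 0 T)) := by
  have hcont : ContinuousOn (fun s => WithLp.toLp 2 (g (s, φ s) k)) (Icc 0 T) :=
    (PiLp.continuous_toLp 2 _).comp_continuousOn <| continuousOn_pi.1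
      (hg.comp (continuousOn_id.prodMk hφ) fun s hs => ⟨hs, mem_univ _⟩) k
  obtain ⟨C, hC⟩ := isCompact_Icc.exists_bound_of_continuousOn hcont
  exact .of_bound (hcont.aestronglyMeasurable measurableSet_Icc) C
    ((ae_restrict_mem measurableSet_Icc).mono hC)

lemma setIntegral_Fvec_apply (hf : ContinuousOn f (Icc 0 T ×ˢ univ))
    (hg : ContinuousOn g (Icc 0 T ×ˢ univ)) (hφ : ContinuousOn φ (Icc 0 T)) (hw : Measurable w)
    (hwU : ∀ t ∈ Icc 0 T, w t ∈ Ubox m) {t : ℝ} (ht : t ∈ Icc 0 T) (k : Fin n) :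
    (∫ s in Icc 0 t, Fvec f g (s, φ s, w s)) k = (∫ s in Icc 0 t, f (s, φ s) k) +
      ∫ s in Icc 0 t, ⟪WithLp.toLp 2 (g (s, φ s) k), WithLp.toLp 2 (w s)⟫_ℝ := by
  have hsub : Icc 0 t ⊆ Icc 0 T := Icc_subset_Icc_right ht.2
  have hfφ : IntegrableOn (fun s => f (s, φ s) k) (Icc 0 t) :=
    ((continuousOn_pi.1 (hf.comp (continuousOn_id.prodMk hφ) fun s hs =>
      ⟨hs, mem_univ _⟩) k).mono hsub).integrableOn_Icc
  have hF : IntegrableOn (fun s => Fvec f g (s, φ s, w s)) (Icc 0 t) :=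
    (integrableOn_comp_of_mem_Ubox (continuousOn_Fvec hf hg) hφ hw hwU).mono_set hsub
  rw [eval_integral fun k => hF.eval k, ← sub_eq_iff_eq_add', ← integral_sub (hF.eval k) hfφ]
  simp [Fvec, PiLp.inner_apply, mul_comm]

namespace TendstoControlled

variable {l : Filter ι} [l.NeBot]

lemma continuousOn_limit (hlim : TendstoControlled T x u l φ w) :
    ContinuousOn φ (Icc 0 T) :=
  hlim.tendstoUniformlyOn.continuousOn (Frequently.of_forall hlim.continuousOn)

lemma tendsto_setIntegral_sub (hlim : TendstoControlled T x u l φ w)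
    {G : Type*} [NormedAddCommGroup G] [NormedSpace ℝ G]
    {Ψ : ℝ × (Fin n → ℝ) × (Fin m → ℝ) → G} (hΨ : ContinuousOn Ψ (Icc 0 T ×ˢ univ)) {t : ℝ}
    (ht : t ∈ Icc 0 T) :
    Tendsto (fun i => ∫ s in Icc 0 t, (Ψ (s, x i s, u i s) - Ψ (s, φ s, u i s))) l (𝓝 0) := by
  obtain ⟨R, hR⟩ := hlim.bounded
  have hφR : MapsTo φ (Icc 0 T) (Metric.closedBall 0 R) := fun s hs =>
    Metric.isClosed_closedBall.mem_of_tendsto (hlim.tendstoUniformlyOn.tendsto_at hs)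
      (Eventually.of_forall fun i => hR i hs)
  have hmem : ∀ᵐ s ∂volume.restrict (Icc 0 t), s ∈ Icc 0 T :=
    (ae_restrict_mem measurableSet_Icc).mono fun s hs => ⟨hs.1, hs.2.trans ht.2⟩
  refine tendsto_integral_sub_comp_of_continuousOn_isCompact
    (p := fun i s => (s, x i s, u i s)) (q := fun i s => (s, φ s, u i s))
    (Q := Icc 0 T ×ˢ Metric.closedBall (0 : Fin n → ℝ) R ×ˢ Ubox m)
    (isCompact_Icc.prod ((isCompact_closedBall _ _).prod (isCompact_Ubox m)))
    (hΨ.mono (prod_mono_right (subset_univ _)))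
    (fun i => hmem.mono fun s hs => mk_mem_prod hs ⟨hR i hs, hlim.mem_Ubox i s hs⟩)
    (fun i => hmem.mono fun s hs => mk_mem_prod hs ⟨hφR hs, hlim.mem_Ubox i s hs⟩) fun d hd => ?_
  filter_upwards [Metric.tendstoUniformlyOn_iff.1 hlim.tendstoUniformlyOn d hd] with i hi
  filter_upwards [hmem] with s hs
  simpa [Prod.dist_eq, dist_comm, hd] using hi s hs

lemma tendsto_setIntegral_Fvec (hlim : TendstoControlled T x u l φ w)
    (hf : ContinuousOn f (Icc 0 T ×ˢ univ)) (hg : ContinuousOn g (Icc 0 T ×ˢ univ)) {t : ℝ}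
    (ht : t ∈ Icc 0 T) :
    Tendsto (fun i => ∫ s in Icc 0 t, Fvec f g (s, φ s, u i s)) l
      (𝓝 (∫ s in Icc 0 t, Fvec f g (s, φ s, w s))) := by
  have hφ := hlim.continuousOn_limit
  refine tendsto_pi_nhds.2 fun k => ?_
  have hweak := hlim.tendstoWeaklyL2.tendsto_setIntegral_inner (memLp_toLp_comp hg hφ k)
    (measurableSet_Icc (a := 0) (b := t))
  rw [Measure.restrict_restrict_of_subset (Icc_subset_Icc_right ht.2)] at hweak
  simpa only [setIntegral_Fvec_apply hf hg hφ (hlim.measurable _) (hlim.mem_Ubox _) ht k,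
    setIntegral_Fvec_apply hf hg hφ hlim.measurable_limit (fun s _ => hlim.limit_mem_Ubox s) ht k]
    using hweak.const_add (∫ s in Icc 0 t, f (s, φ s) k)

lemma limit_eq_add_integral (hlim : TendstoControlled T x u l φ w)
    (hf : ContinuousOn f (Icc 0 T ×ˢ univ)) (hg : ContinuousOn g (Icc 0 T ×ˢ univ))
    {ε : ι → ℝ} (hε : Tendsto ε l (𝓝 0))
    (hxu : ∀ i, IsApproxAdmissible T X XT x₀ f g M (ε i) (x i) (u i)) {t : ℝ}
    (ht : t ∈ Icc 0 T) : φ t = x₀ + ∫ s in Icc 0 t, Fvec f g (s, φ s, w s) := by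
  have hF : ContinuousOn (Fvec f g) (Icc 0 T ×ˢ univ) := continuousOn_Fvec hf hg
  have hint : ∀ y : ℝ → Fin n → ℝ, ContinuousOn y (Icc 0 T) → ∀ i,
      IntegrableOn (fun s => Fvec f g (s, y s, u i s)) (Icc 0 t) := fun y hy i =>
    (integrableOn_comp_of_mem_Ubox hF hy (hlim.measurable i) (hlim.mem_Ubox i)).mono_set
      (Icc_subset_Icc_right ht.2)
  have hFlim : Tendsto (fun i => ∫ s in Icc 0 t, Fvec f g (s, x i s, u i s)) l
      (𝓝 (∫ s in Icc 0 t, Fvec f g (s, φ s, w s))) := by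
    have hsum := (hlim.tendsto_setIntegral_sub hF ht).add (hlim.tendsto_setIntegral_Fvec hf hg ht)
    simpa only [zero_add, integral_sub (hint _ (hlim.continuousOn _) _)
      (hint φ hlim.continuousOn_limit _), sub_add_cancel] using hsum
  have hdefect : Tendsto (fun i => x i t - x₀ - ∫ s in Icc 0 t, Fvec f g (s, x i s, u i s)) l
      (𝓝 0) := squeeze_zero_norm (fun i => (hxu i).norm_defect_le t ht) hε
  have hxlim := ((hlim.tendstoUniformlyOn.tendsto_at ht).sub_const x₀).sub hFlim
  rw [← sub_eq_iff_eq_add', ← sub_eq_zero, tendsto_nhds_unique hxlim hdefect]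

lemma setIntegral_le_of_eventually_le (hlim : TendstoControlled T x u l φ w) (hh : Continuous h)
    (hconv : ∀ t ∈ Icc 0 T, ConvexOn ℝ (Ubox m) fun v => h (t, φ t, v)) {c : ℝ}
    (hle : ∀ᶠ i in l, ∫ t in Icc 0 T, h (t, φ t, u i t) ≤ c) :
    ∫ t in Icc 0 T, h (t, φ t, w t) ≤ c := by
  have hφ := hlim.continuousOn_limit
  obtain ⟨C, hC⟩ := (isCompact_Icc.prod ((isCompact_Icc.image_of_continuousOn hφ).prod
    (isCompact_Ubox m))).exists_bound_of_continuousOn hh.continuousOn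
  have hmem := ae_restrict_mem (μ := volume) (measurableSet_Icc (a := (0 : ℝ)) (b := T))
  refine (hlim.tendstoWeaklyL2.ae_mem_and_integral_le
    (ℓ := fun t v => h (t, φ t, WithLp.ofLp v)) (M := C) (K := WithLp.ofLp ⁻¹' Ubox m)
    (fun i => memLp_toLp_of_mem_Ubox (hlim.measurable i) (hlim.mem_Ubox i))
    (memLp_toLp_of_mem_Ubox hlim.measurable_limit fun t _ => hlim.limit_mem_Ubox t)
    (isClosed_toLp_Ubox m)
    (fun i => hmem.mono fun t ht => hlim.mem_Ubox i t ht) (fun v hv => ?_)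
    (hmem.mono fun t ht v hv => hC _ ⟨ht, mem_image_of_mem φ ht, hv⟩)
    (ae_of_all _ fun t => Continuous.continuousOn ?_) (convex_toLp_Ubox m)
    (hmem.mono fun t ht => (hconv t ht).comp_linearMap (WithLp.linearEquiv 2 ℝ _).toLinearMap)
    hle).2
  · exact hh.comp_aestronglyMeasurable (aestronglyMeasurable_id.prodMk
      ((hφ.aestronglyMeasurable measurableSet_Icc).prodMk
        ((PiLp.continuous_ofLp 2 _).comp_aestronglyMeasurable hv)))
  · have := PiLp.continuous_ofLp 2 fun _ : Fin m => ℝ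
    fun_prop

lemma Jcost_le_of_tendsto (hlim : TendstoControlled T x u l φ w) (hT : 0 ≤ T) (hh : Continuous h)
    (hH : Continuous H) (hconv : ∀ t ∈ Icc 0 T, ConvexOn ℝ (Ubox m) fun v => h (t, φ t, v))
    {b : ι → ℝ} {c : ℝ} (hb : Tendsto b l (𝓝 c)) (hle : ∀ i, Jcost T h H (x i) (u i) ≤ b i) :
    Jcost T h H φ w ≤ c := by
  have hTmem : T ∈ Icc 0 T := ⟨hT, le_rfl⟩
  have hφ := hlim.continuousOn_limit
  have hint : ∀ y : ℝ → Fin n → ℝ, ContinuousOn y (Icc 0 T) → ∀ i,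
      IntegrableOn (fun t => h (t, y t, u i t)) (Icc 0 T) := fun y hy i =>
    integrableOn_comp_of_mem_Ubox hh.continuousOn hy (hlim.measurable i) (hlim.mem_Ubox i)
  have hHlim : Tendsto (fun i => H (x i T)) l (𝓝 (H (φ T))) :=
    (hH.tendsto _).comp (hlim.tendstoUniformlyOn.tendsto_at hTmem)
  have hbound : Tendsto (fun i => b i - H (x i T) -
      ∫ t in Icc 0 T, (h (t, x i t, u i t) - h (t, φ t, u i t))) l (𝓝 (c - H (φ T))) := by
    simpa only [sub_zero] using
      (hb.sub hHlim).sub (hlim.tendsto_setIntegral_sub hh.continuousOn hTmem)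
  suffices hrun : ∫ t in Icc 0 T, h (t, φ t, w t) ≤ c - H (φ T) by
    rw [Jcost]
    linarith
  refine le_of_forall_pos_le_add fun e he => ?_
  refine hlim.setIntegral_le_of_eventually_le hh hconv ?_
  filter_upwards [hbound.eventually_le_const (lt_add_of_pos_right _ he)] with i hi
  have hJ := hle i
  rw [integral_sub (hint _ (hlim.continuousOn i) i) (hint φ hφ i)] at hi
  rw [Jcost] at hJ
  linarith

lemma limit_mem (hlim : TendstoControlled T x u l φ w) (hT : 0 < T) (hX : IsClosed X)
    (hXne : X.Nonempty) {ε : ι → ℝ} (hε : Tendsto ε l (𝓝 0))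
    (hxu : ∀ i, IsApproxAdmissible T X XT x₀ f g M (ε i) (x i) (u i)) :
    ∀ t ∈ Icc 0 T, φ t ∈ X := by
  have hdist : ContinuousOn (fun t => Metric.infDist (φ t) X) (Icc 0 T) :=
    (Metric.continuous_infDist_pt X).comp_continuousOn hlim.continuousOn_limit
  have hle : ∫ t in Icc 0 T, Metric.infDist (φ t) X ≤ 0 := by
    simpa [Jcost] using hlim.Jcost_le_of_tendsto (h := fun z => Metric.infDist z.2.1 X)
      (H := fun _ => 0) hT.le ((Metric.continuous_infDist_pt X).comp (by fun_prop))
      continuous_const (fun t _ => convexOn_const (Metric.infDist (φ t) X) (convex_Icc _ _)) hε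
      fun i => by simpa [Jcost] using (hxu i).integral_infDist_le
  have hzero : (fun t => Metric.infDist (φ t) X) =ᵐ[volume.restrict (Icc 0 T)] fun _ => 0 :=
    (integral_eq_zero_iff_of_nonneg (fun _ => Metric.infDist_nonneg) hdist.integrableOn_Icc).1
      (hle.antisymm (integral_nonneg fun _ => Metric.infDist_nonneg))
  exact fun t ht => (hX.mem_iff_infDist_zero hXne).2
    (Measure.eqOn_Icc_of_ae_eq volume hT.ne hzero hdist continuousOn_const ht)

lemma isAdmissiblePair_limit (hlim : TendstoControlled T x u l φ w) (hT : 0 < T)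
    (hX : IsClosed X) (hXne : X.Nonempty) (hXT : IsClosed XT) (hXTne : XT.Nonempty)
    (hf : ContinuousOn f (Icc 0 T ×ˢ univ)) (hg : ContinuousOn g (Icc 0 T ×ˢ univ))
    {ε : ι → ℝ} (hε : Tendsto ε l (𝓝 0))
    (hxu : ∀ i, IsApproxAdmissible T X XT x₀ f g M (ε i) (x i) (u i)) :
    IsAdmissiblePair T X XT x₀ f g φ w := by
  have hU : ∀ t ∈ Icc 0 T, w t ∈ Ubox m := fun t _ => hlim.limit_mem_Ubox t
  have hφT : Tendsto (fun i => x i T) l (𝓝 (φ T)) :=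
    hlim.tendstoUniformlyOn.tendsto_at ⟨hT.le, le_rfl⟩
  have hdistT : Metric.infDist (φ T) XT = 0 :=
    tendsto_nhds_unique (((Metric.continuous_infDist_pt XT).tendsto _).comp hφT)
      (squeeze_zero (fun _ => Metric.infDist_nonneg) (fun i => (hxu i).infDist_le) hε)
  have hφ : ∀ t ∈ Icc 0 T, φ t = x₀ + ∫ s in Icc 0 t, Fvec f g (s, φ s, w s) := fun t ht =>
    hlim.limit_eq_add_integral hf hg hε hxu ht
  refine ⟨hlim.measurable_limit, hU, ?_, (hXT.mem_iff_infDist_zero hXTne).2 hdistT,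
    hlim.limit_mem hT hX hXne hε hxu, ?_, hφ⟩
  · simpa using hφ 0 ⟨le_rfl, hT.le⟩
  · exact integrableOn_comp_of_mem_Ubox
      (continuousOn_Fvec hf hg) hlim.continuousOn_limit
      hlim.measurable_limit hU

end TendstoControlled

end Compactness

section OccupationMeasure

lemma integral_fderiv_comp_eq_sub {E : Type*} [NormedAddCommGroup E] [NormedSpace ℝ E]
    {v : E → ℝ} (hv : ContDiff ℝ 1 v) {γ γ' : ℝ → E} {a b : ℝ} (hab : a ≤ b) {K : NNReal}
    (hγ : LipschitzOnWith K γ (Icc a b))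
    (hγ' : ∀ᵐ t ∂volume.restrict (Icc a b), HasDerivAt γ (γ' t) t) :
    ∫ t in Icc a b, fderiv ℝ v (γ t) (γ' t) = v (γ b) - v (γ a) := by
  obtain ⟨C, hC⟩ := (hv.locallyLipschitz.locallyLipschitzOn (s := γ '' Icc a b))
    |>.exists_lipschitzOnWith_of_compact (isCompact_Icc.image_of_continuousOn hγ.continuousOn)
  have hlip : LipschitzOnWith (C * K) (v ∘ γ) (uIcc a b) := by
    rw [uIcc_of_le hab]
    exact hC.comp hγ (mapsTo_image γ _)
  calc ∫ t in Icc a b, fderiv ℝ v (γ t) (γ' t)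
    _ = ∫ t in Icc a b, deriv (v ∘ γ) t := integral_congr_ae <| hγ'.mono fun t ht =>
      ((hv.differentiable one_ne_zero _).hasFDerivAt.comp_hasDerivAt t ht).deriv.symm
    _ = ∫ t in a..b, deriv (v ∘ γ) t := by
      rw [integral_Icc_eq_integral_Ioc, intervalIntegral.integral_of_le hab]
    _ = v (γ b) - v (γ a) := hlip.absolutelyContinuousOnInterval.integral_deriv_eq_sub

lemma ae_hasDerivAt_of_eq_add_integral {E : Type*} [NormedAddCommGroup E] [NormedSpace ℝ E]
    [CompleteSpace E] {x q : ℝ → E} {x₀ : E} {a b : ℝ} (hq : IntegrableOn q (Icc a b))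
    (hx : ∀ t ∈ Icc a b, x t = x₀ + ∫ s in Icc a t, q s) :
    ∀ᵐ t ∂volume.restrict (Icc a b), HasDerivAt x (q t) t := by
  rcases lt_or_ge b a with hab | hab
  · simp [Icc_eq_empty hab.not_ge]
  have hint : IntervalIntegrable q volume a b :=
    (intervalIntegrable_iff_integrableOn_Icc_of_le hab).2 hq
  rw [← Measure.restrict_congr_set Ioo_ae_eq_Icc, ae_restrict_iff' measurableSet_Ioo]
  filter_upwards [hint.ae_hasDerivAt_integral] with t ht htI
  rw [uIcc_of_le hab] at ht
  refine ((ht (Ioo_subset_Icc_self htI) a ⟨le_rfl, hab⟩).const_add x₀).congr_of_eventuallyEq ?_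
  filter_upwards [Icc_mem_nhds htI.1 htI.2] with s hs
  rw [hx s hs, integral_Icc_eq_integral_Ioc, intervalIntegral.integral_of_le hs.1]

variable {n m : ℕ} {T : ℝ} {X XT : Set (Fin n → ℝ)} {x₀ : Fin n → ℝ}
  {f : ℝ × (Fin n → ℝ) → Fin n → ℝ} {g : ℝ × (Fin n → ℝ) → Fin n → Fin m → ℝ}
  {h : ℝ × (Fin n → ℝ) × (Fin m → ℝ) → ℝ} {H : (Fin n → ℝ) → ℝ}
  {x : ℝ → Fin n → ℝ} {u : ℝ → Fin m → ℝ}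

/-- The occupation measure of a controlled trajectory: the time it spends in each region of
`(t, x, u)`-space. -/
def occupationMeasure (T : ℝ) (x : ℝ → Fin n → ℝ) (u : ℝ → Fin m → ℝ) :
    Measure (ℝ × (Fin n → ℝ) × (Fin m → ℝ)) :=
  (volume.restrict (Icc 0 T)).map fun t => (t, x t, u t)

lemma IsAdmissiblePair.aemeasurable (hX : IsCompact X)
    (hF : ContinuousOn (Fvec f g) (Icc 0 T ×ˢ univ)) (hxu : IsAdmissiblePair T X XT x₀ f g x u) :
    AEMeasurable (fun t => (t, x t, u t)) (volume.restrict (Icc 0 T)) := by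
  obtain ⟨M, hM⟩ := hxu.exists_lipschitzOnWith hX hF
  exact aemeasurable_id.prodMk
    ((hM.continuousOn.aemeasurable measurableSet_Icc).prodMk hxu.1.aemeasurable)

lemma IsAdmissiblePair.ae_occupationMeasure_mem (hX : IsCompact X)
    (hF : ContinuousOn (Fvec f g) (Icc 0 T ×ˢ univ)) (hxu : IsAdmissiblePair T X XT x₀ f g x u) :
    ∀ᵐ z ∂occupationMeasure T x u, z ∈ Icc 0 T ×ˢ X ×ˢ Ubox m :=
  (ae_map_iff (hxu.aemeasurable hX hF)
    (isCompact_Icc.prod (hX.prod (isCompact_Ubox m))).measurableSet).2 <|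
    (ae_restrict_mem measurableSet_Icc).mono fun t ht =>
      ⟨ht, hxu.2.2.2.2.1 t ht, hxu.2.1 t ht⟩

lemma IsAdmissiblePair.integral_occupationMeasure (hX : IsCompact X)
    (hF : ContinuousOn (Fvec f g) (Icc 0 T ×ˢ univ)) (hxu : IsAdmissiblePair T X XT x₀ f g x u)
    {Ψ : ℝ × (Fin n → ℝ) × (Fin m → ℝ) → ℝ} (hΨ : ContinuousOn Ψ (Icc 0 T ×ˢ X ×ˢ Ubox m)) :
    ∫ z, Ψ z ∂occupationMeasure T x u = ∫ t in Icc 0 T, Ψ (t, x t, u t) := by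
  refine integral_map (hxu.aemeasurable hX hF) ?_
  have hmeas := hΨ.aestronglyMeasurable (μ := occupationMeasure T x u)
    (isCompact_Icc.prod (hX.prod (isCompact_Ubox m))).measurableSet
  rwa [Measure.restrict_eq_self_of_ae_mem (hxu.ae_occupationMeasure_mem hX hF)] at hmeas

lemma IsAdmissiblePair.satisfiesLiouville_occupationMeasure (hT : 0 ≤ T) (hX : IsCompact X)
    (hF : ContinuousOn (Fvec f g) (Icc 0 T ×ˢ univ)) (hxu : IsAdmissiblePair T X XT x₀ f g x u) :
    SatisfiesLiouville T x₀ f g (occupationMeasure T x u) (Measure.dirac (x T)) := by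
  intro v hv
  have hLv : ContinuousOn (LFop f g v) (Icc 0 T ×ˢ X ×ˢ Ubox m) := by
    have hdv : Continuous fun z : ℝ × (Fin n → ℝ) × (Fin m → ℝ) => fderiv ℝ v (z.1, z.2.1) :=
      (hv.continuous_fderiv one_ne_zero).comp (by fun_prop)
    simp only [funext (LFop_eq_fderiv (f := f) (g := g) v)]
    exact hdv.continuousOn.clm_apply
      (continuousOn_const.prodMk (hF.mono (prod_mono_right (subset_univ _))))
  obtain ⟨M, hM⟩ := hxu.exists_lipschitzOnWith hX hF
  have hderiv : ∀ᵐ t ∂volume.restrict (Icc 0 T),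
      HasDerivAt (fun t => (t, x t)) ((1 : ℝ), Fvec f g (t, x t, u t)) t :=
    (ae_hasDerivAt_of_eq_add_integral hxu.2.2.2.2.2.1 hxu.2.2.2.2.2.2).mono fun t ht =>
      (hasDerivAt_id t).prodMk ht
  rw [integral_dirac, hxu.integral_occupationMeasure hX hF hLv]
  simp only [LFop_eq_fderiv]
  have hlip : LipschitzOnWith (max 1 M) (fun t => (t, x t)) (Icc 0 T) :=
    LipschitzWith.id.lipschitzOnWith.prodMk hM
  rw [integral_fderiv_comp_eq_sub hv hT hlip hderiv, hxu.2.2.1, add_sub_cancel]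

lemma IsAdmissiblePair.qFeasible_occupationMeasure (hT : 0 ≤ T) (hX : IsCompact X)
    (hF : ContinuousOn (Fvec f g) (Icc 0 T ×ˢ univ)) (hxu : IsAdmissiblePair T X XT x₀ f g x u) :
    QFeasible T X XT x₀ f g (occupationMeasure T x u) (Measure.dirac (x T)) := by
  refine ⟨?_, inferInstance, hxu.ae_occupationMeasure_mem hX hF, ?_,
    hxu.satisfiesLiouville_occupationMeasure hT hX hF⟩
  · rw [occupationMeasure]
    infer_instance
  · simpa using hxu.2.2.2.1

lemma IsAdmissiblePair.Jcost_mem_QVals (hT : 0 ≤ T) (hX : IsCompact X)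
    (hF : ContinuousOn (Fvec f g) (Icc 0 T ×ˢ univ)) (hh : Continuous h)
    (hxu : IsAdmissiblePair T X XT x₀ f g x u) :
    Jcost T h H x u ∈ QVals T X XT x₀ f g h H :=
  ⟨_, _, hxu.qFeasible_occupationMeasure hT hX hF, by
    rw [Qcost, hxu.integral_occupationMeasure hX hF hh.continuousOn, integral_dirac, Jcost]⟩

end OccupationMeasure

section NoRelaxationGap

open Filter Topology
open scoped NNReal

variable {n m : ℕ} {T : ℝ} {X XT : Set (Fin n → ℝ)} {x₀ : Fin n → ℝ}
  {f : ℝ × (Fin n → ℝ) → Fin n → ℝ} {g : ℝ × (Fin n → ℝ) → Fin n → Fin m → ℝ}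
  {h : ℝ × (Fin n → ℝ) × (Fin m → ℝ) → ℝ} {H : (Fin n → ℝ) → ℝ}
  {η : Measure (ℝ × (Fin n → ℝ) × (Fin m → ℝ))} {ηT : Measure (Fin n → ℝ)}

lemma tendsto_one_div_add_hyperfilter_nhds_zero :
    Tendsto (fun N : ℕ => 1 / ((N : ℝ) + 1)) (hyperfilter ℕ) (𝓝 0) :=
  tendsto_one_div_add_atTop_nhds_zero_nat.mono_left Nat.hyperfilter_le_atTop

lemma exists_seq_isApproxAdmissible (hT : 0 ≤ T) (hX : IsCompact X) (hXT : IsCompact XT)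
    (hF : ContinuousOn (Fvec f g) (Icc 0 T ×ˢ univ)) (hh : Continuous h) (hH : Continuous H)
    (hη : QFeasible T X XT x₀ f g η ηT) :
    ∃ (M : ℝ≥0) (x : ℕ → ℝ → Fin n → ℝ) (u : ℕ → ℝ → Fin m → ℝ) (ε : ℕ → ℝ),
      (∀ N, IsApproxAdmissible T X XT x₀ f g M (ε N) (x N) (u N)) ∧
      Tendsto ε (hyperfilter ℕ) (𝓝 0) ∧
      ∀ N : ℕ, Jcost T h H (x N) (u N) ≤ Qcost h H η ηT + 1 / ((N : ℝ) + 1) := by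
  obtain ⟨M, hM⟩ := exists_forall_norm_Fvec_le hX hF
  have happrox := fun N : ℕ => exists_isApproxAdmissible hT hX hXT hF hh hH hM hη (N + 1)
    (e := 1 / ((N : ℝ) + 1)) Nat.one_div_pos_of_nat
  choose x u ε hxu hJ using happrox
  refine ⟨M, x, u, ε, hxu, ?_, fun N => ?_⟩
  · obtain ⟨B, hB⟩ := IsApproxAdmissible.exists_le_Jcost (X := X) (XT := XT) (x₀ := x₀)
      (f := f) (g := g) (M := M) hT hh hH
    have hlim := tendsto_one_div_add_hyperfilter_nhds_zero.const_mul (Qcost h H η ηT + 1 - B)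
    rw [mul_zero] at hlim
    refine squeeze_zero (fun N => (hxu N).nonneg) (fun N => ?_) hlim
    have hone : 1 / ((N : ℝ) + 1) ≤ 1 := by
      simpa using Nat.one_div_le_one_div (α := ℝ) N.zero_le
    rw [mul_one_div, le_div_iff₀ (by positivity)]
    linarith [hJ N, hB _ _ _ (hxu N)]
  · have := mul_nonneg (N.cast_add_one_pos (α := ℝ)).le (hxu N).nonneg
    linarith [hJ N]

lemma exists_isAdmissiblePair_Jcost_le_Qcost (hT : 0 < T) (hX : IsCompact X) (hXne : X.Nonempty)
    (hXT : IsCompact XT) (hXTne : XT.Nonempty) (hf : ContinuousOn f (Icc 0 T ×ˢ univ))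
    (hg : ContinuousOn g (Icc 0 T ×ˢ univ)) (hh : Continuous h) (hH : Continuous H)
    (hconv : ∀ t ∈ Icc 0 T, ∀ y ∈ X, ConvexOn ℝ (Ubox m) fun v => h (t, y, v))
    (hη : QFeasible T X XT x₀ f g η ηT) :
    ∃ x u, IsAdmissiblePair T X XT x₀ f g x u ∧ Jcost T h H x u ≤ Qcost h H η ηT := by
  obtain ⟨M, x, u, ε, hxu, hε, hJ⟩ := exists_seq_isApproxAdmissible hT.le hX hXT
    (continuousOn_Fvec hf hg) hh hH hη
  obtain ⟨φ, w, hlim⟩ := exists_tendstoControlled (hyperfilter ℕ) hxu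
  have hφX := hlim.limit_mem hT hX.isClosed hXne hε hxu
  refine ⟨φ, w, hlim.isAdmissiblePair_limit hT hX.isClosed hXne hXT.isClosed hXTne hf hg hε hxu,
    hlim.Jcost_le_of_tendsto hT.le hh hH (fun t ht => hconv t ht _ (hφX t ht)) ?_ hJ⟩
  simpa using tendsto_one_div_add_hyperfilter_nhds_zero.const_add (Qcost h H η ηT)

end NoRelaxationGap

section Perturbation

open Filter

variable {n m : ℕ} {T : ℝ} {X XT : Set (Fin n → ℝ)} {x₀ : Fin n → ℝ}
  {f : ℝ × (Fin n → ℝ) → Fin n → ℝ} {g : ℝ × (Fin n → ℝ) → Fin n → Fin m → ℝ}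
  {h k : ℝ × (Fin n → ℝ) × (Fin m → ℝ) → ℝ} {H : (Fin n → ℝ) → ℝ}
  {x xs : ℝ → Fin n → ℝ} {u us : ℝ → Fin m → ℝ}
  {η : Measure (ℝ × (Fin n → ℝ) × (Fin m → ℝ))} {ηT : Measure (Fin n → ℝ)}

lemma QFeasible.integrable (hη : QFeasible T X XT x₀ f g η ηT) (hX : IsCompact X)
    (hh : Continuous h) : Integrable h η := by
  have := hη.1
  have hQ := isCompact_Icc (a := (0 : ℝ)) (b := T) |>.prod (hX.prod (isCompact_Ubox m))
  exact integrable_comp_of_continuousOn_isCompact hQ hQ.measurableSet hh.continuousOn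
    aemeasurable_id hη.2.2.1

lemma Qcost_add_mul (hh : Integrable h η) (hk : Integrable k η) (e : ℝ) :
    Qcost (fun z => h z + e * k z) H η ηT = Qcost h H η ηT + e * ∫ z, k z ∂η := by
  rw [Qcost, Qcost, integral_add hh (hk.const_mul e), integral_const_mul, add_right_comm]

lemma Jcost_add_mul (hh : IntegrableOn (fun t => h (t, x t, u t)) (Icc 0 T))
    (hk : IntegrableOn (fun t => k (t, x t, u t)) (Icc 0 T)) (e : ℝ) :
    Jcost T (fun z => h z + e * k z) H x u =
      Jcost T h H x u + e * ∫ t in Icc 0 T, k (t, x t, u t) := by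
  rw [Jcost, Jcost, integral_add hh (hk.const_mul e), integral_const_mul, add_right_comm]

lemma IsAdmissiblePair.integrableOn_comp (hX : IsCompact X)
    (hF : ContinuousOn (Fvec f g) (Icc 0 T ×ˢ univ)) (hh : Continuous h)
    (hxu : IsAdmissiblePair T X XT x₀ f g x u) :
    IntegrableOn (fun t => h (t, x t, u t)) (Icc 0 T) := by
  obtain ⟨M, hM⟩ := hxu.exists_lipschitzOnWith hX hF
  exact integrableOn_comp_of_mem_Ubox hh.continuousOn hM.continuousOn hxu.1 hxu.2.1

lemma exists_isAdmissiblePair_of_perturbation (hT : 0 < T) (hX : IsCompact X) (hXne : X.Nonempty)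
    (hXT : IsCompact XT) (hXTne : XT.Nonempty) (hf : ContinuousOn f (Icc 0 T ×ˢ univ))
    (hg : ContinuousOn g (Icc 0 T ×ˢ univ)) (hh : Continuous h) (hH : Continuous H)
    (hconv : ∀ t ∈ Icc 0 T, ∀ y ∈ X, ConvexOn ℝ (Ubox m) fun v => h (t, y, v))
    (hη : QFeasible T X XT x₀ f g η ηT) {J : ℝ} (hJ : J ∈ lowerBounds (JVals T X XT x₀ f g h H))
    (hQ : Qcost h H η ηT ≤ J) (b : BoundedContinuousFunction (ℝ × (Fin n → ℝ)) ℝ)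
    {e : ℝ} (he : 0 < e) :
    ∃ x u, IsAdmissiblePair T X XT x₀ f g x u ∧
      ∫ t in Icc 0 T, b (t, x t) ≤ ∫ z, b (z.1, z.2.1) ∂η ∧
      Jcost T h H x u ≤ J + (∫ z, b (z.1, z.2.1) ∂η + ‖b‖ * T) * e := by
  have hb : Continuous fun z : ℝ × (Fin n → ℝ) × (Fin m → ℝ) => b (z.1, z.2.1) := by fun_prop
  have hF : ContinuousOn (Fvec f g) (Icc 0 T ×ˢ univ) := continuousOn_Fvec hf hg
  obtain ⟨x, u, hxu, hle⟩ := exists_isAdmissiblePair_Jcost_le_Qcost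
    (h := fun z => h z + e * b (z.1, z.2.1)) hT hX hXne hXT hXTne hf hg (by fun_prop) hH
    (fun t ht y hy => (hconv t ht y hy).add_const (e * b (t, y))) hη
  rw [Jcost_add_mul (k := fun z => b (z.1, z.2.1)) (hxu.integrableOn_comp hX hF hh)
      (hxu.integrableOn_comp hX hF hb),
    Qcost_add_mul (hη.integrable hX hh) (hη.integrable hX hb)] at hle
  have hopt : J ≤ Jcost T h H x u := hJ ⟨x, u, hxu, rfl⟩
  have hbound : -(‖b‖ * T) ≤ ∫ t in Icc 0 T, b (t, x t) := by
    have := norm_setIntegral_le_of_norm_le_const (μ := volume) (s := Icc 0 T) (by simp)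
      fun t _ => b.norm_coe_le_norm (t, x t)
    rw [Real.volume_real_Icc_of_le hT.le, sub_zero] at this
    exact neg_le_of_abs_le this
  refine ⟨x, u, hxu, le_of_mul_le_mul_left (by linarith) he, ?_⟩
  linarith [mul_le_mul_of_nonneg_left hbound he.le]

lemma exists_isAdmissiblePair_Jcost_le_and_integral_le (hT : 0 < T) (hX : IsCompact X)
    (hXne : X.Nonempty) (hXT : IsCompact XT) (hXTne : XT.Nonempty)
    (hf : ContinuousOn f (Icc 0 T ×ˢ univ)) (hg : ContinuousOn g (Icc 0 T ×ˢ univ))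
    (hh : Continuous h) (hH : Continuous H)
    (hconv : ∀ t ∈ Icc 0 T, ∀ y ∈ X, ConvexOn ℝ (Ubox m) fun v => h (t, y, v))
    (hη : QFeasible T X XT x₀ f g η ηT) {J : ℝ} (hJ : J ∈ lowerBounds (JVals T X XT x₀ f g h H))
    (hQ : Qcost h H η ηT ≤ J) (b : BoundedContinuousFunction (ℝ × (Fin n → ℝ)) ℝ) :
    ∃ x u, IsAdmissiblePair T X XT x₀ f g x u ∧ Jcost T h H x u ≤ J ∧
      ∫ t in Icc 0 T, b (t, x t) ≤ ∫ z, b (z.1, z.2.1) ∂η := by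
  have hF : ContinuousOn (Fvec f g) (Icc 0 T ×ˢ univ) := continuousOn_Fvec hf hg
  have hperturb := fun N : ℕ => exists_isAdmissiblePair_of_perturbation hT hX hXne hXT hXTne hf hg
    hh hH hconv hη hJ hQ b (e := 1 / ((N : ℝ) + 1)) Nat.one_div_pos_of_nat
  choose x u hxu hxb hxJ using hperturb
  obtain ⟨M, hM⟩ := exists_forall_norm_Fvec_le hX hF
  have happrox := fun N => (hxu N).isApproxAdmissible hT.le hF hM
  obtain ⟨φ, w, hlim⟩ := exists_tendstoControlled (hyperfilter ℕ) happrox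
  have hadm := hlim.isAdmissiblePair_limit hT hX.isClosed hXne hXT.isClosed hXTne hf hg
    tendsto_const_nhds happrox
  refine ⟨φ, w, hadm, hlim.Jcost_le_of_tendsto hT.le hh hH
    (fun t ht => hconv t ht _ (hadm.2.2.2.2.1 t ht)) ?_ hxJ, ?_⟩
  · simpa using (tendsto_one_div_add_hyperfilter_nhds_zero.const_mul
      (∫ z, b (z.1, z.2.1) ∂η + ‖b‖ * T)).const_add J
  · simpa [Jcost] using hlim.Jcost_le_of_tendsto (h := fun z => b (z.1, z.2.1)) (H := fun _ => 0)
      hT.le (by fun_prop) continuous_const (fun t _ => convexOn_const (b (t, φ t)) (convex_Icc _ _))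
      tendsto_const_nhds fun N => by simpa [Jcost] using hxb N

end Perturbation

theorem Q_optimal_marginal_is_occupation_general {n m : ℕ} {T : ℝ} (hT : 0 < T)
    {X XT : Set (Fin n → ℝ)} (hX : IsCompact X) (hXT : IsCompact XT) {x₀ : Fin n → ℝ}
    {f : ℝ × (Fin n → ℝ) → Fin n → ℝ} {g : ℝ × (Fin n → ℝ) → Fin n → Fin m → ℝ}
    (hf : ContinuousOn f (Icc 0 T ×ˢ univ)) (hg : ContinuousOn g (Icc 0 T ×ˢ univ))
    {h : ℝ × (Fin n → ℝ) × (Fin m → ℝ) → ℝ} {H : (Fin n → ℝ) → ℝ}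
    (hh : Continuous h) (hH : Continuous H) {xs : ℝ → Fin n → ℝ} {us : ℝ → Fin m → ℝ}
    (hconv : ∀ t ∈ Icc 0 T, ∀ y ∈ X, ConvexOn ℝ (Ubox m) fun u => h (t, y, u))
    (hopt : IsAdmissiblePair T X XT x₀ f g xs us)
    (hleast : Jcost T h H xs us ∈ lowerBounds (JVals T X XT x₀ f g h H))
    (huniq : ∀ x u, IsAdmissiblePair T X XT x₀ f g x u → Jcost T h H x u = Jcost T h H xs us →
      ∀ᵐ t ∂volume.restrict (Icc 0 T), x t = xs t)
    {η : Measure (ℝ × (Fin n → ℝ) × (Fin m → ℝ))} {ηT : Measure (Fin n → ℝ)}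
    (hη : QFeasible T X XT x₀ f g η ηT)
    (hηopt : Qcost h H η ηT ∈ lowerBounds (QVals T X XT x₀ f g h H)) :
    η.map (fun z => (z.1, z.2.1)) = (volume.restrict (Icc 0 T)).map fun t => (t, xs t) := by
  have hF : ContinuousOn (Fvec f g) (Icc 0 T ×ˢ univ) := continuousOn_Fvec hf hg
  have hXne : X.Nonempty := ⟨xs T, hopt.2.2.2.2.1 T ⟨hT.le, le_rfl⟩⟩
  have hintegral_le (b : BoundedContinuousFunction (ℝ × (Fin n → ℝ)) ℝ) :
      ∫ t in Icc 0 T, b (t, xs t) ≤ ∫ z, b (z.1, z.2.1) ∂η := by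
    obtain ⟨x, u, hxu, hJ, hb⟩ := exists_isAdmissiblePair_Jcost_le_and_integral_le hT hX hXne hXT
      ⟨_, hopt.2.2.2.1⟩ hf hg hh hH hconv hη hleast (hηopt (hopt.Jcost_mem_QVals hT.le hX hF hh)) b
    have hae := huniq x u hxu (hJ.antisymm (hleast ⟨x, u, hxu, rfl⟩))
    exact (integral_congr_ae (hae.mono fun t ht => by simp only [ht])).trans_le hb
  have hpath : AEMeasurable (fun t => (t, xs t)) (volume.restrict (Icc 0 T)) :=
    (measurable_fst.prodMk measurable_snd.fst).comp_aemeasurable (hopt.aemeasurable hX hF)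
  have := hη.1
  refine ext_of_forall_integral_eq_of_IsFiniteMeasure fun b => ?_
  rw [integral_map (by fun_prop) b.continuous.aestronglyMeasurable,
    integral_map hpath b.continuous.aestronglyMeasurable]
  have hneg := hintegral_le (-b)
  simp only [BoundedContinuousFunction.coe_neg, Pi.neg_apply, integral_neg, neg_le_neg_iff] at hneg
  exact hneg.antisymm (hintegral_le b)

/-- under convexity of h(t,x,·) and existence of an a.e.-unique optimal
admissible pair (x*,u*), if (η*, η_T*) is an optimal solution of (Q), then the
(t,x)-marginal of η* is the occupation measure of x*, i.e. the pushforward of Lebesgue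
measure on [0,T] under t ↦ (t, x*(t)). -/
theorem Q_optimal_marginal_is_occupation
    {n m : ℕ} (hn : 0 < n) (hm : 0 < m) (T : ℝ) (hT : 0 < T)
    (X XT : Set (Fin n → ℝ)) (hX : IsCompact X) (hXT : IsCompact XT) (hXTsub : XT ⊆ X)
    (x₀ : Fin n → ℝ) (hx₀ : x₀ ∈ X)
    (f : ℝ × (Fin n → ℝ) → Fin n → ℝ) (g : ℝ × (Fin n → ℝ) → Fin n → Fin m → ℝ)
    (hf : ContinuousOn f (Set.Icc (0 : ℝ) T ×ˢ Set.univ))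
    (hg : ContinuousOn g (Set.Icc (0 : ℝ) T ×ˢ Set.univ))
    (h : ℝ × (Fin n → ℝ) × (Fin m → ℝ) → ℝ) (H : (Fin n → ℝ) → ℝ)
    (hh : Continuous h) (hH : Continuous H)
    (xs : ℝ → Fin n → ℝ) (us : ℝ → Fin m → ℝ)
    (hconv : ∀ (t : ℝ) (x : Fin n → ℝ),
      ConvexOn ℝ Set.univ (fun u : Fin m → ℝ => h (t, x, u)))
    (hopt : IsAdmissiblePair T X XT x₀ f g xs us)
    (hleast : IsLeast (JVals T X XT x₀ f g h H) (Jcost T h H xs us))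
    (huniq : ∀ (x : ℝ → Fin n → ℝ) (u : ℝ → Fin m → ℝ),
      IsAdmissiblePair T X XT x₀ f g x u → Jcost T h H x u = Jcost T h H xs us →
      ∀ᵐ t ∂(volume.restrict (Set.Icc (0 : ℝ) T)), x t = xs t ∧ u t = us t)
    (η : Measure (ℝ × (Fin n → ℝ) × (Fin m → ℝ))) (ηT : Measure (Fin n → ℝ))
    (hηfeas : QFeasible T X XT x₀ f g η ηT)
    (hηopt : IsLeast (QVals T X XT x₀ f g h H) (Qcost h H η ηT)) :
    η.map (fun z => (z.1, z.2.1)) =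
      Measure.map (fun t => (t, xs t)) (volume.restrict (Set.Icc (0 : ℝ) T)) := by
  exact Q_optimal_marginal_is_occupation_general hT hX hXT hf hg hh hH
    (fun t _ y _ => (hconv t y).subset (subset_univ _) (convex_Icc _ _)) hopt hleast.2
    (fun x u hxu hJ => (huniq x u hxu hJ).mono fun _ => And.left) hηfeas hηopt.2

end
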